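/- There exists a constant C > 0 such that for every real x ≥ 1, the ratio (number of pairs (I, J) ∈ P(x) with I ⊔ J = ⊤) / (number of pairs in P(x)) differs from 1/ζ_{ℚ(i)}(2) by at most C·x^(−2/3). -/

import Mathlib

open Real

/-- The absolute norm of an ideal of `ℤ[i]`: the cardinality of the quotient ring. -/
noncomputable def normI (I : Ideal GaussianInt) : ℕ := Nat.card (GaussianInt ⧸ I)

/-- `P x` : pairs of nonzero ideals of `ℤ[i]` with both norms at most `x`. -/
noncomputable def P (x : ℝ) : Set (Ideal GaussianInt × Ideal GaussianInt) :=
  {p | p.1 ≠ ⊥ ∧ p.2 ≠ ⊥ ∧ (normI p.1 : ℝ) ≤ x ∧ (normI p.2 : ℝ) ≤ x}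

/-- `ζ_{ℚ(i)}(2)`, the sum of `1/N(I)²` over nonzero ideals of `ℤ[i]`. -/
noncomputable def zetaQi2 : ℝ := ∑' I : {I : Ideal GaussianInt // I ≠ ⊥}, 1 / (normI I.1 : ℝ) ^ 2


noncomputable def ee (t : ℝ) : ℂ := Complex.exp (((2 * π * t : ℝ) : ℂ) * Complex.I)

lemma ee_norm (t : ℝ) : ‖ee t‖ = 1 := Complex.norm_exp_ofReal_mul_I _

lemma ee_add (s t : ℝ) : ee (s + t) = ee s * ee t := by
  unfold ee; rw [← Complex.exp_add]; congr 1; push_cast; ring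

lemma ee_int (k : ℤ) : ee k = 1 := by
  unfold ee
  rw [Complex.exp_eq_one_iff]
  exact ⟨k, by push_cast; ring⟩

lemma abel_bound (w : ℕ → ℝ) (E : ℕ → ℂ) (hE : ∀ n, ‖E n‖ ≤ 1) (m : ℕ)
    (hw : ∀ n < m, w (n+1) ≤ w n) :
    ‖∑ n ∈ Finset.range (m+1), (w n : ℂ) * (E n - E (n+1)) + (w m : ℂ) * E (m+1)‖
      ≤ |w 0| + (w 0 - w m) := by
  induction m with
  | zero =>
    simp only [zero_add, Finset.range_one, Finset.sum_singleton, sub_self, add_zero]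
    have : (w 0 : ℂ) * (E 0 - E 1) + (w 0 : ℂ) * E 1 = w 0 * E 0 := by ring
    rw [this, norm_mul, Complex.norm_real, Real.norm_eq_abs]
    exact mul_le_of_le_one_right (abs_nonneg _) (hE 0)
  | succ m ih =>
    have ih' := ih (fun n hn => hw n (by omega))
    rw [Finset.sum_range_succ]
    have : ∑ n ∈ Finset.range (m+1), (w n : ℂ) * (E n - E (n+1)) + (w (m+1) : ℂ) * (E (m+1) - E (m+1+1)) + (w (m+1) : ℂ) * E (m+1+1)
      = (∑ n ∈ Finset.range (m+1), (w n : ℂ) * (E n - E (n+1)) + (w m : ℂ) * E (m+1)) + ((w (m+1) - w m : ℝ) : ℂ) * E (m+1) := by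
      push_cast; ring
    rw [this]
    refine (norm_add_le _ _).trans ?_
    have h2 : ‖((w (m+1) - w m : ℝ) : ℂ) * E (m+1)‖ ≤ w m - w (m+1) := by
      rw [norm_mul, Complex.norm_real, Real.norm_eq_abs, abs_sub_comm, abs_of_nonneg (by linarith [hw m (by omega)])]
      exact mul_le_of_le_one_right (by linarith [hw m (by omega)]) (hE _)
    linarith

lemma sin_lower {t δ : ℝ} (h0 : 0 ≤ δ) (h1 : δ ≤ t) (h2 : t ≤ 1 - δ) : 2 * δ ≤ sin (π * t) := by
  have hp := pi_pos
  by_cases h : t ≤ 1/2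
  · have := Real.mul_le_sin (x := π * t) (by nlinarith) (by nlinarith)
    have e : 2 / π * (π * t) = 2 * t := by field_simp
    linarith
  · have := Real.mul_le_sin (x := π * (1 - t)) (by nlinarith) (by nlinarith)
    have e : 2 / π * (π * (1 - t)) = 2 * (1 - t) := by field_simp
    have e2 : sin (π * (1 - t)) = sin (π * t) := by
      rw [mul_sub, mul_one, Real.sin_pi_sub]
    linarith

lemma ee_key {t : ℝ} (hs : sin (π * t) ≠ 0) :
    (1 : ℂ) = (1/2 + Complex.I / 2 * ((cos (π * t) / sin (π * t) : ℝ) : ℂ)) * (1 - ee t) := by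
  have e : ee t = (cos (π * t) + sin (π * t) * Complex.I)^2 := by
    unfold ee
    rw [show ((2 * π * t : ℝ) : ℂ) * Complex.I = (2:ℕ) * (((π * t : ℝ) : ℂ) * Complex.I) by push_cast; ring,
      Complex.exp_nat_mul, Complex.exp_mul_I, Complex.ofReal_cos, Complex.ofReal_sin]
  have hs' : ((sin (π * t) : ℝ) : ℂ) ≠ 0 := by exact_mod_cast hs
  have hcs : ((sin (π * t) : ℝ) : ℂ)^2 + ((cos (π * t) : ℝ) : ℂ)^2 = 1 := by
    exact_mod_cast Real.sin_sq_add_cos_sq (π * t)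
  rw [e, Complex.ofReal_div]
  generalize ((sin (π * t) : ℝ) : ℂ) = s at *
  generalize ((cos (π * t) : ℝ) : ℂ) = c at *
  have hI := Complex.I_sq
  field_simp
  have : c^2 = 1 - s^2 := by linear_combination hcs
  linear_combination (-s + c * Complex.I) * hcs + (2 * s * c^2 + s^3 + s^2 * c * Complex.I) * hI

lemma kusmin_landau0 (f : ℕ → ℝ) (m : ℕ) (δ : ℝ) (hδ : 0 < δ) (k : ℤ)
    (hmono : ∀ n < m, f (n+1) - f n ≤ f (n+2) - f (n+1))
    (h1 : ∀ n ≤ m, k + δ ≤ f (n+1) - f n) (h2 : ∀ n ≤ m, f (n+1) - f n ≤ k + 1 - δ) :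
    ‖∑ n ∈ Finset.range (m+1), ee (f n)‖ ≤ 2 / δ := by
  set t : ℕ → ℝ := fun n => f (n+1) - f n - k with ht
  set w : ℕ → ℝ := fun n => cos (π * t n) / sin (π * t n) with hw
  have hsin : ∀ n ≤ m, 2 * δ ≤ sin (π * t n) := fun n hn =>
    sin_lower hδ.le (by simp only [ht]; linarith [h1 n hn]) (by simp only [ht]; linarith [h2 n hn])
  have hwb : ∀ n ≤ m, |w n| ≤ 1 / (2 * δ) := by
    intro n hn
    have := hsin n hn
    simp only [hw, abs_div]
    rw [abs_of_pos (by linarith : 0 < sin (π * t n))]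
    exact div_le_div₀ zero_le_one (abs_cos_le_one _) (by positivity) this
  have hwm : ∀ n < m, w (n+1) ≤ w n := by
    intro n hn
    have a := hsin n hn.le
    have b := hsin (n+1) hn
    simp only [hw]
    rw [div_le_div_iff₀ (by linarith) (by linarith)]
    have : 0 ≤ sin (π * t (n+1) - π * t n) := by
      have hp := pi_pos
      apply Real.sin_nonneg_of_nonneg_of_le_pi
      · rw [← mul_sub]; apply mul_nonneg hp.le; simp only [ht]; linarith [hmono n hn]
      · rw [← mul_sub]; nth_rewrite 2 [← mul_one π]; apply mul_le_mul_of_nonneg_left _ hp.le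
        simp only [ht]; linarith [h2 (n+1) hn, h1 n hn.le]
    rw [Real.sin_sub] at this
    linarith
  have hE : ∀ n ≤ m, ee (f n) = 1/2 * (ee (f n) - ee (f (n+1))) + Complex.I / 2 * (w n * (ee (f n) - ee (f (n+1)))) := by
    intro n hn
    have hs := hsin n hn
    have key := ee_key (t := t n) (by linarith)
    have e1 : ee (f (n+1)) = ee (f n) * ee (t n) := by
      have : f (n+1) = f n + t n + k := by simp only [ht]; ring
      rw [this, ee_add, ee_int, mul_one, ee_add]
    rw [e1]
    have hwn : w n = cos (π * t n) / sin (π * t n) := rfl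
    rw [hwn]
    linear_combination ee (f n) * key
  rw [Finset.sum_congr rfl (fun n hn => hE n (by simpa [Nat.lt_succ_iff] using hn)), Finset.sum_add_distrib, ← Finset.mul_sum, ← Finset.mul_sum,
    Finset.sum_range_sub']
  have ab := abel_bound w (fun n => ee (f n)) (fun n => (ee_norm _).le) m hwm
  set S := ∑ n ∈ Finset.range (m+1), (w n : ℂ) * (ee (f n) - ee (f (n+1)))
  have hS : ‖S‖ ≤ 2 / δ := by
    have e : S = (S + w m * ee (f (m+1))) - w m * ee (f (m+1)) := by ring
    rw [e]
    refine (norm_sub_le _ _).trans ?_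
    have : ‖(w m : ℂ) * ee (f (m+1))‖ = |w m| := by
      rw [norm_mul, ee_norm, mul_one, Complex.norm_real, Real.norm_eq_abs]
    rw [this]
    have a := hwb 0 (Nat.zero_le _)
    have b := hwb m le_rfl
    have : 2 / δ = 4 * (1 / (2 * δ)) := by field_simp; norm_num
    have c := neg_abs_le (w m)
    have d := le_abs_self (w 0)
    linarith
  have h01 : ‖ee (f 0) - ee (f (m+1))‖ ≤ 2 := by
    refine (norm_sub_le _ _).trans ?_
    rw [ee_norm, ee_norm]; norm_num
  refine (norm_add_le _ _).trans ?_
  rw [norm_mul, norm_mul]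
  have : ‖Complex.I / 2‖ = 1/2 := by simp
  rw [this]
  have : ‖(1/2 : ℂ)‖ = 1/2 := by simp
  rw [this]
  have hd : 1 ≤ 1 / δ := by
    rw [le_div_iff₀ hδ]
    have := h1 0 (Nat.zero_le _)
    have := h2 0 (Nat.zero_le _)
    linarith
  have : 2 / δ = 2 * (1 / δ) := by ring
  linarith


lemma incr_bounds (g : ℕ → ℝ) (N : ℕ) (l u : ℝ)
    (h1 : ∀ n, n + 1 < N → l ≤ g (n+1) - g n) (h2 : ∀ n, n + 1 < N → g (n+1) - g n ≤ u)
    (a d : ℕ) (h : a + d < N) : l * d ≤ g (a+d) - g a ∧ g (a+d) - g a ≤ u * d := by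
  induction d with
  | zero => simp
  | succ d ih =>
    have := ih (by omega)
    have e1 := h1 (a+d) (by omega)
    have e2 := h2 (a+d) (by omega)
    rw [← add_assoc]
    push_cast
    constructor <;> nlinarith [this.1, this.2]

lemma conv_set (S : Finset ℕ) (hS : S.Nonempty) (N : ℕ) (g : ℕ → ℝ)
    (p q : ℝ) (hm : ∀ a b, a ≤ b → b < N → g a ≤ g b)
    (hdef : S = (Finset.range N).filter (fun n => p ≤ g n ∧ g n ≤ q)) :
    ∃ a d : ℕ, a + d < N ∧ S = Finset.Icc a (a+d) := by
  refine ⟨S.min' hS, S.max' hS - S.min' hS, ?_, ?_⟩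
  · have : S.min' hS ≤ S.max' hS := Finset.min'_le_max' S hS
    have h2 := Finset.max'_mem S hS
    rw [Nat.add_sub_cancel' this]
    generalize S.max' hS = B at h2 ⊢
    rw [hdef] at h2
    exact Finset.mem_range.mp (Finset.mem_filter.mp h2).1
  · have hle : S.min' hS ≤ S.max' hS := Finset.min'_le_max' S hS
    rw [Nat.add_sub_cancel' hle]
    have hmin := Finset.min'_mem S hS
    have hmax := Finset.max'_mem S hS
    generalize hA : S.min' hS = A at *
    generalize hB : S.max' hS = B at *
    ext n
    constructor
    · intro hn
      rw [Finset.mem_Icc, ← hA, ← hB]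
      exact ⟨Finset.min'_le _ _ hn, Finset.le_max' _ _ hn⟩
    · intro hn
      rw [Finset.mem_Icc] at hn
      rw [hdef, Finset.mem_filter, Finset.mem_range] at hmin hmax ⊢
      exact ⟨by omega, hmin.2.1.trans (hm _ _ hn.1 (by omega)), (hm _ _ hn.2 (by omega)).trans hmax.2.2⟩

lemma second_deriv_test (f : ℕ → ℝ) (N : ℕ) (l α : ℝ) (hl : 0 < l) (hα : 1 ≤ α)
    (h1 : ∀ n, n + 1 < N → l ≤ (f (n+2) - f (n+1)) - (f (n+1) - f n))
    (h2 : ∀ n, n + 1 < N → (f (n+2) - f (n+1)) - (f (n+1) - f n) ≤ α * l) :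
    ‖∑ n ∈ Finset.range N, ee (f n)‖ ≤ (α * l * N + 2) * (6 / √l) := by
  classical
  have hsl : 0 < √l := Real.sqrt_pos.mpr hl
  have hsq : √l * √l = l := Real.mul_self_sqrt hl.le
  rcases Nat.eq_zero_or_pos N with hN | hN
  · subst hN; simp; positivity
  by_cases hbig : 1/4 < l
  · have htriv : ‖∑ n ∈ Finset.range N, ee (f n)‖ ≤ N := by
      refine (norm_sum_le _ _).trans ?_
      simp [ee_norm]
    refine htriv.trans ?_
    have hs : 1/2 < √l := by
      apply Real.lt_sqrt_of_sq_lt; linarith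
    have : (N:ℝ) ≤ (l * N) * (6 / √l) := by
      have e : (l * N) * (6 / √l) = 6 * √l * N := by
        field_simp; nlinarith
      rw [e]
      have : (0:ℝ) ≤ N := Nat.cast_nonneg _
      nlinarith
    refine this.trans ?_
    apply mul_le_mul_of_nonneg_right _ (by positivity)
    have : (0:ℝ) ≤ l * N := by positivity
    nlinarith
  push Not at hbig
  have hs2 : √l ≤ 1/2 := by
    rw [show (1/2:ℝ) = √(1/4) by rw [show (1/4:ℝ) = (1/2)^2 by norm_num, Real.sqrt_sq (by norm_num)]]
    exact Real.sqrt_le_sqrt hbig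
  set δ := √l with hδ
  set g : ℕ → ℝ := fun n => f (n+1) - f n with hg
  have hinc := incr_bounds g N l (α * l) h1 h2
  have hm : ∀ a b, a ≤ b → b < N → g a ≤ g b := by
    intro a b hab hb
    have := (hinc a (b-a) (by omega)).1
    rw [Nat.add_sub_cancel' hab] at this
    have h0 : (0:ℝ) ≤ l * ((b - a : ℕ) : ℝ) := by positivity
    linarith
  -- card bound
  have hcard : ∀ p q : ℝ, p ≤ q → (((Finset.range N).filter (fun n => p ≤ g n ∧ g n ≤ q)).card : ℝ) ≤ (q - p) / l + 1 := by
    intro p q hpq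
    set S := (Finset.range N).filter (fun n => p ≤ g n ∧ g n ≤ q) with hS
    rcases S.eq_empty_or_nonempty with he | hne
    · rw [he]; simp
      have := div_nonneg (sub_nonneg.mpr hpq) hl.le
      linarith
    obtain ⟨a, d, had, hSI⟩ := conv_set S hne N g p q hm hS
    have ha : a ∈ S := by rw [hSI]; simp
    have hb : a + d ∈ S := by rw [hSI]; simp
    rw [hS, Finset.mem_filter] at ha hb
    rw [hSI, Nat.card_Icc]
    have := (hinc a d had).1
    have h3 : (d:ℝ) ≤ (q - p) / l := by
      rw [le_div_iff₀ hl]; linarith [ha.2.1, hb.2.2]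
    have : a + d + 1 - a = d + 1 := by omega
    rw [this]; push_cast; linarith
  have hblock : ∀ k : ℤ, ‖∑ n ∈ (Finset.range N).filter (fun n => ⌊g n⌋ = k), ee (f n)‖ ≤ 6 / δ := by
    intro k
    set T := (Finset.range N).filter (fun n => ⌊g n⌋ = k) with hT
    set G := (Finset.range N).filter (fun n => (k + δ : ℝ) ≤ g n ∧ g n ≤ k + 1 - δ) with hG
    set A := (Finset.range N).filter (fun n => (k : ℝ) ≤ g n ∧ g n ≤ k + δ) with hA
    set B := (Finset.range N).filter (fun n => (k + 1 - δ : ℝ) ≤ g n ∧ g n ≤ k + 1) with hB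
    have hGT : G ⊆ T := by
      intro n hn
      rw [hG, Finset.mem_filter] at hn
      rw [hT, Finset.mem_filter, Int.floor_eq_iff]
      exact ⟨hn.1, by linarith [hn.2.1], by linarith [hn.2.2]⟩
    have hTG : T \ G ⊆ A ∪ B := by
      intro n hn
      rw [Finset.mem_sdiff, hT, Finset.mem_filter, Int.floor_eq_iff, hG, Finset.mem_filter] at hn
      obtain ⟨⟨hn1, hn2, hn3⟩, hn4⟩ := hn
      rw [Finset.mem_union, hA, hB, Finset.mem_filter, Finset.mem_filter]
      by_cases hc : g n ≤ k + δ
      · exact Or.inl ⟨hn1, hn2, hc⟩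
      · push Not at hc
        right
        refine ⟨hn1, ?_, hn3.le⟩
        by_contra hc2
        push Not at hc2
        exact hn4 ⟨hn1, hc.le, hc2.le⟩
    rw [← Finset.sum_sdiff hGT]
    refine (norm_add_le _ _).trans ?_
    have b1 : ‖∑ n ∈ T \ G, ee (f n)‖ ≤ 2 * (δ / l + 1) := by
      refine (norm_sum_le _ _).trans ?_
      simp only [ee_norm, Finset.sum_const, nsmul_eq_mul, mul_one]
      have c1 : ((T \ G).card : ℝ) ≤ A.card + B.card := by
        exact_mod_cast (Finset.card_le_card hTG).trans (Finset.card_union_le _ _)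
      have c2 := hcard k (k + δ) (by linarith)
      have c3 := hcard (k + 1 - δ) (k + 1) (by linarith)
      rw [show (k + δ - k : ℝ) = δ by ring] at c2
      rw [show ((k + 1) - (k + 1 - δ) : ℝ) = δ by ring] at c3
      rw [← hA] at c2
      rw [← hB] at c3
      linarith
    have b2 : ‖∑ n ∈ G, ee (f n)‖ ≤ 2 / δ := by
      rcases G.eq_empty_or_nonempty with he | hne
      · rw [he]; simp; positivity
      obtain ⟨a, d, had, hSI⟩ := conv_set G hne N g _ _ hm hG
      have hmem : ∀ n ≤ d, (k + δ : ℝ) ≤ g (a + n) ∧ g (a + n) ≤ k + 1 - δ := by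
        intro n hn
        have : a + n ∈ G := by rw [hSI, Finset.mem_Icc]; omega
        rw [hG, Finset.mem_filter] at this
        exact this.2
      have := kusmin_landau0 (fun n => f (a + n)) d δ hsl k
        (fun n hn => hm (a+n) (a+n+1) (by omega) (by omega))
        (fun n hn => (hmem n hn).1) (fun n hn => (hmem n hn).2)
      rw [hSI, ← Finset.Ico_add_one_right_eq_Icc, Finset.sum_Ico_eq_sum_range]
      rw [show a + d + 1 - a = d + 1 by omega]
      exact this
    have e : δ / l = 1 / δ := by
      rw [← hsq]; field_simp
    rw [e] at b1
    have : 2 ≤ 1 / δ := by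
      rw [le_div_iff₀ hsl]; linarith
    have e2 : 2 / δ = 2 * (1 / δ) := by ring
    have e6 : 6 / δ = 6 * (1 / δ) := by ring
    linarith
  have hmaps : ∀ n ∈ Finset.range N, ⌊g n⌋ ∈ Finset.Icc ⌊g 0⌋ ⌊g (N-1)⌋ := by
    intro n hn
    rw [Finset.mem_range] at hn
    rw [Finset.mem_Icc]
    exact ⟨Int.floor_le_floor (hm 0 n (by omega) hn), Int.floor_le_floor (hm n (N-1) (by omega) (by omega))⟩
  rw [← Finset.sum_fiberwise_of_maps_to hmaps]
  refine (norm_sum_le _ _).trans ((Finset.sum_le_sum (fun k _ => hblock k)).trans ?_)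
  rw [Finset.sum_const, nsmul_eq_mul]
  apply mul_le_mul_of_nonneg_right _ (by positivity)
  have hle : ⌊g 0⌋ ≤ ⌊g (N-1)⌋ := Int.floor_le_floor (hm 0 (N-1) (by omega) (by omega))
  have hc : ((Finset.Icc ⌊g 0⌋ ⌊g (N-1)⌋).card : ℝ) = ⌊g (N-1)⌋ + 1 - ⌊g 0⌋ := by
    have := Int.card_Icc_of_le ⌊g 0⌋ ⌊g (N-1)⌋ (by omega)
    exact_mod_cast this
  rw [hc]
  have u := (hinc 0 (N-1) (by omega)).2
  rw [zero_add] at u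
  have v1 := Int.floor_le (g (N-1))
  have v2 := Int.lt_floor_add_one (g 0)
  have v3 : ((N-1:ℕ):ℝ) ≤ N := by exact_mod_cast Nat.sub_le _ _
  have v4 : α * l * ((N-1:ℕ):ℝ) ≤ α * l * N := mul_le_mul_of_nonneg_left v3 (by positivity)
  linarith


noncomputable def FF (t : ℝ) : ℝ := ((Int.fract t)^2 - Int.fract t) / 2

lemma FF_int_add (t : ℝ) (k : ℤ) : FF (t + k) = FF t := by
  unfold FF; rw [Int.fract_add_intCast]

lemma FF_eq {t : ℝ} (h0 : 0 ≤ t) (h1 : t ≤ 1) : FF t = (t^2 - t)/2 := by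
  unfold FF
  rcases h1.lt_or_eq with h | h
  · rw [Int.fract_eq_self.mpr ⟨h0, h⟩]
  · subst h; simp

lemma FF_hasSum (t : ℝ) :
    HasSum (fun n : ℕ => 1 / (n : ℝ)^2 * cos (2 * π * n * t)) (2 * π^2 * (FF t + 1/12)) := by
  have h := hasSum_one_div_nat_pow_mul_cos (k := 1) one_ne_zero (x := Int.fract t)
    ⟨Int.fract_nonneg t, (Int.fract_lt_one t).le⟩
  have e : (fun n : ℕ => 1 / (n : ℝ)^2 * cos (2 * π * n * t)) =
      (fun n : ℕ => 1 / (n : ℝ)^(2*1) * cos (2 * π * n * Int.fract t)) := by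
    funext n
    have : 2 * π * n * t = 2 * π * n * Int.fract t + ((n * ⌊t⌋ : ℤ) : ℝ) * (2 * π) := by
      have := Int.floor_add_fract t
      push_cast
      nth_rewrite 1 [← this]; ring
    rw [this, Real.cos_add_int_mul_two_pi]
  rw [e]
  convert h using 1
  unfold FF
  simp [Polynomial.bernoulli, Finset.sum_range_succ, Nat.factorial, bernoulli_one, Polynomial.eval_add, bernoulli_two, Nat.choose]
  ring

lemma psi_upper (t D : ℝ) (h0 : 0 < D) (h1 : D ≤ 1) :
    Int.fract t - 1/2 ≤ (FF t - FF (t - D)) / D + D := by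
  have hf := Int.fract_nonneg t
  have hf1 := Int.fract_lt_one t
  have e : FF (t - D) = FF (Int.fract t - D) := by
    have : t - D = (Int.fract t - D) + (⌊t⌋ : ℤ) := by
      have := Int.floor_add_fract t; linarith
    rw [this, FF_int_add]
  rw [e]
  have et : FF t = (Int.fract t^2 - Int.fract t)/2 := rfl
  rw [et]
  generalize Int.fract t = s at *
  rw [← sub_le_iff_le_add, le_div_iff₀ h0]
  by_cases hs : D ≤ s
  · rw [FF_eq (by linarith) (by linarith)]
    nlinarith
  · push Not at hs
    have : FF (s - D) = FF (s - D + 1) := by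
      have := FF_int_add (s - D) 1; push_cast at this; exact this.symm
    rw [this, FF_eq (by linarith) (by linarith)]
    nlinarith

lemma psi_lower (t D : ℝ) (h0 : 0 < D) (h1 : D ≤ 1) :
    (FF (t + D) - FF t) / D - D ≤ Int.fract t - 1/2 := by
  have hf := Int.fract_nonneg t
  have hf1 := Int.fract_lt_one t
  have e : FF (t + D) = FF (Int.fract t + D) := by
    have : t + D = (Int.fract t + D) + (⌊t⌋ : ℤ) := by
      have := Int.floor_add_fract t; linarith
    rw [this, FF_int_add]
  rw [e]
  have et : FF t = (Int.fract t^2 - Int.fract t)/2 := rfl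
  rw [et]
  generalize Int.fract t = s at *
  rw [sub_le_iff_le_add, div_le_iff₀ h0]
  by_cases hs : s + D ≤ 1
  · rw [FF_eq (by linarith) (by linarith)]
    nlinarith
  · push Not at hs
    have : FF (s + D) = FF (s + D - 1) := by
      have := FF_int_add (s + D - 1) 1; push_cast at this; rw [← this]; congr 1; ring
    rw [this, FF_eq (by linarith) (by linarith)]
    nlinarith

/-- bound for the weights -/
noncomputable def uu (H : ℕ) (h : ℕ) : ℝ := min (1 / √h / H) (1 / (h * √h))

lemma uu_nonneg (H h : ℕ) : 0 ≤ uu H h := le_min (by positivity) (by positivity)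

lemma uu_sum (H : ℕ) (hH : 1 ≤ H) (K : ℕ) :
    ∑ h ∈ Finset.range (K+1), uu H h ≤ 4 / √H := by
  have hH' : (1:ℝ) ≤ H := by exact_mod_cast hH
  have hHpos : (0:ℝ) < √H := Real.sqrt_pos.mpr (by linarith)
  have hHs : √(H:ℝ) * √H = H := Real.mul_self_sqrt (by linarith)
  have key : (K ≤ H → ∑ h ∈ Finset.range (K+1), uu H h ≤ 2 * √K / H) ∧
      (H ≤ K → ∑ h ∈ Finset.range (K+1), uu H h ≤ 4 / √H - 2 / √K) := by
    induction K with
    | zero =>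
      refine ⟨fun _ => ?_, fun h => by omega⟩
      simp [uu]
    | succ K ih =>
      have a1 : √((K:ℝ)+1) * √((K:ℝ)+1) = K+1 := Real.mul_self_sqrt (by positivity)
      have a0 : √(K:ℝ) * √(K:ℝ) = K := Real.mul_self_sqrt (by positivity)
      have ap : 0 < √((K:ℝ)+1) := Real.sqrt_pos.mpr (by positivity)
      have an : 0 ≤ √(K:ℝ) := Real.sqrt_nonneg _
      have ale : √(K:ℝ) ≤ √((K:ℝ)+1) := Real.sqrt_le_sqrt (by linarith)
      rw [Finset.sum_range_succ]
      have first : K + 1 ≤ H → ∑ h ∈ Finset.range (K+1), uu H h + uu H (K+1) ≤ 2 * √((K+1:ℕ):ℝ) / H := by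
        intro hK
        have i1 := ih.1 (by omega)
        have i2 : uu H (K+1) ≤ 1 / √((K+1:ℕ):ℝ) / H := min_le_left _ _
        push_cast at i2 ⊢
        have : 1 / √((K:ℝ)+1) ≤ 2 * √((K:ℝ)+1) - 2 * √K := by
          rw [div_le_iff₀ ap]; nlinarith
        have : 1 / √((K:ℝ)+1) / H ≤ (2 * √((K:ℝ)+1) - 2 * √K) / H := by gcongr
        rw [sub_div] at this
        linarith
      refine ⟨first, fun hK => ?_⟩
      rcases hK.eq_or_lt with h | h
      · have := first h.ge
        rw [← h] at this ⊢
        refine this.trans (le_of_eq ?_)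
        have e : 4 / √(H:ℝ) - 2 / √H = 2 / √H := by ring
        rw [e, div_eq_div_iff (by linarith : (0:ℝ) < H).ne' hHpos.ne']
        linarith
      · have i1 := ih.2 (by omega)
        have i2 : uu H (K+1) ≤ 1 / (((K+1:ℕ):ℝ) * √((K+1:ℕ):ℝ)) := min_le_right _ _
        push_cast at i2 ⊢
        have hKp : (0:ℝ) < K := by exact_mod_cast (by omega : 0 < K)
        have akp : 0 < √(K:ℝ) := Real.sqrt_pos.mpr hKp
        have : 1 / (((K:ℝ)+1) * √((K:ℝ)+1)) ≤ 2 / √K - 2 / √((K:ℝ)+1) := by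
          rw [div_sub_div _ _ akp.ne' ap.ne', div_le_div_iff₀ (by positivity) (by positivity)]
          set p := √(K:ℝ)
          set q := √((K:ℝ)+1)
          rw [← a1]
          have e : q * q - p * p = 1 := by linarith
          have e2 : (q - p) * (2 * q) ≥ 1 := by nlinarith
          have e3 : 0 ≤ q * q := by positivity
          have e4 : p * q ≤ q * q := by nlinarith
          nlinarith [mul_nonneg e3 (sub_nonneg.mpr e2)]
        linarith
  rcases le_total K H with h | h
  · refine (key.1 h).trans ?_
    have : √(K:ℝ) ≤ √H := Real.sqrt_le_sqrt (by exact_mod_cast h)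
    have e : 2 * √(H:ℝ) / H = 2 / √H := by
      nth_rewrite 2 [← hHs]; field_simp
    have : 2 * √(K:ℝ) / H ≤ 2 * √H / H := by gcongr
    have e4 : 4 / √(H:ℝ) = 2 / √H + 2 / √H := by ring
    have : 0 < 2 / √(H:ℝ) := by positivity
    linarith
  · have := key.2 h
    have : 0 ≤ 2 / √(K:ℝ) := by positivity
    linarith

lemma uu_tsum (H : ℕ) (hH : 1 ≤ H) : Summable (uu H) ∧ ∑' h, uu H h ≤ 4 / √H := by
  have hb : ∀ n, ∑ h ∈ Finset.range n, uu H h ≤ 4 / √H := fun n =>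
    (Finset.sum_le_sum_of_subset_of_nonneg (Finset.range_mono (Nat.le_succ n))
      (fun i _ _ => uu_nonneg H i)).trans (uu_sum H hH n)
  have hs : Summable (uu H) := summable_of_sum_range_le (uu_nonneg H) hb
  exact ⟨hs, hs.tsum_le_of_sum_range_le hb⟩

lemma ee_re (t : ℝ) : (ee t).re = cos (2 * π * t) := by
  unfold ee; rw [Complex.exp_ofReal_mul_I_re]

lemma ee_sub_one (t : ℝ) : ‖ee t - 1‖ ≤ 2 * π * |t| := by
  unfold ee
  have := Real.norm_exp_I_mul_ofReal_sub_one_le (x := 2 * π * t)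
  rw [mul_comm] at this
  refine this.trans ?_
  rw [Real.norm_eq_abs, abs_mul, abs_of_pos (by positivity : (0:ℝ) < 2 * π)]

lemma FF_diff_sum (f : ℕ → ℝ) (N : ℕ) (B : ℝ) (hB : 0 ≤ B)
    (hS : ∀ h : ℕ, 1 ≤ h → ‖∑ n ∈ Finset.range N, ee (h * f n)‖ ≤ B * √h)
    (H : ℕ) (hH : 1 ≤ H) (D : ℝ) (hD : |D| = 1 / H) :
    |∑ n ∈ Finset.range N, (FF (f n + D) - FF (f n))| ≤ 4 * B / √H := by
  have hH' : (1:ℝ) ≤ H := by exact_mod_cast hH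
  have hp := pi_pos
  have hp3 := pi_gt_three
  obtain ⟨us, ub⟩ := uu_tsum H hH
  have hsum : HasSum (fun h : ℕ => ∑ n ∈ Finset.range N, (1 / (h : ℝ)^2 * cos (2 * π * h * (f n + D))
      - 1 / (h : ℝ)^2 * cos (2 * π * h * f n)))
      (∑ n ∈ Finset.range N, (2 * π^2 * (FF (f n + D) + 1/12) - 2 * π^2 * (FF (f n) + 1/12))) :=
    hasSum_sum (fun n _ => (FF_hasSum _).sub (FF_hasSum _))
  have hterm : ∀ h : ℕ, ‖∑ n ∈ Finset.range N, (1 / (h : ℝ)^2 * cos (2 * π * h * (f n + D))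
      - 1 / (h : ℝ)^2 * cos (2 * π * h * f n))‖ ≤ 2 * π * B * uu H h := by
    intro h
    rcases Nat.eq_zero_or_pos h with h0 | hpos
    · subst h0; simp [uu]
    have hh : (0:ℝ) < h := by exact_mod_cast hpos
    have hsh : 0 < √(h:ℝ) := Real.sqrt_pos.mpr hh
    have hshh : √(h:ℝ) * √h = h := Real.mul_self_sqrt hh.le
    have e : ∑ n ∈ Finset.range N, (1 / (h : ℝ)^2 * cos (2 * π * h * (f n + D))
      - 1 / (h : ℝ)^2 * cos (2 * π * h * f n)) =
      1 / (h : ℝ)^2 * ((ee (h * D) - 1) * ∑ n ∈ Finset.range N, ee (h * f n)).re := by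
      rw [Finset.mul_sum, Complex.re_sum, Finset.mul_sum]
      apply Finset.sum_congr rfl
      intro n _
      rw [sub_mul, one_mul, ← ee_add, Complex.sub_re, ee_re, ee_re]
      rw [show 2 * π * (h * D + h * f n) = 2 * π * h * (f n + D) by ring,
        show 2 * π * (h * f n) = 2 * π * h * f n by ring]
      ring
    rw [e, Real.norm_eq_abs, abs_mul, abs_of_pos (by positivity : 0 < 1 / (h:ℝ)^2)]
    have hle : |((ee (h * D) - 1) * ∑ n ∈ Finset.range N, ee (h * f n)).re| ≤ ‖ee (h * D) - 1‖ * (B * √h) := by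
      refine (Complex.abs_re_le_norm _).trans ?_
      rw [norm_mul]
      exact mul_le_mul_of_nonneg_left (hS h hpos) (norm_nonneg _)
    have n1 : ‖ee (h * D) - 1‖ ≤ 2 * π * (h / H) := by
      refine (ee_sub_one _).trans (le_of_eq ?_)
      rw [abs_mul, hD, abs_of_pos hh]; ring
    have n2 : ‖ee (h * D) - 1‖ ≤ 2 * π := by
      refine (norm_sub_le _ _).trans ?_
      rw [ee_norm, norm_one]; linarith
    have : 2 * π * B * uu H h = min (2 * π * B * (1 / √h / H)) (2 * π * B * (1 / (h * √h))) := by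
      unfold uu; rw [mul_min_of_nonneg _ _ (by positivity)]
    rw [this]
    apply le_min
    · calc _ ≤ 1 / (h:ℝ)^2 * (2 * π * (h / H) * (B * √h)) := by
            apply mul_le_mul_of_nonneg_left _ (by positivity)
            exact hle.trans (mul_le_mul_of_nonneg_right n1 (by positivity))
        _ = _ := by
            field_simp
            try nlinarith
    · calc _ ≤ 1 / (h:ℝ)^2 * (2 * π * (B * √h)) := by
            apply mul_le_mul_of_nonneg_left _ (by positivity)
            exact hle.trans (mul_le_mul_of_nonneg_right n2 (by positivity))
        _ = _ := by
            field_simp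
            try nlinarith
  have hb := tsum_of_norm_bounded (us.hasSum.mul_left (2 * π * B)) hterm
  rw [hsum.tsum_eq] at hb
  have e : ∑ n ∈ Finset.range N, (2 * π^2 * (FF (f n + D) + 1/12) - 2 * π^2 * (FF (f n) + 1/12))
     = 2 * π^2 * ∑ n ∈ Finset.range N, (FF (f n + D) - FF (f n)) := by
    rw [Finset.mul_sum]; apply Finset.sum_congr rfl; intro n _; ring
  rw [e, Real.norm_eq_abs, abs_mul, abs_of_pos (by positivity)] at hb
  have h3 : 2 * π^2 * |∑ n ∈ Finset.range N, (FF (f n + D) - FF (f n))| ≤ 2 * π^2 * (4 * B / √H) := by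
    refine hb.trans ?_
    have : 2 * π * B * ∑' h, uu H h ≤ 2 * π * B * (4 / √H) := mul_le_mul_of_nonneg_left ub (by positivity)
    refine this.trans ?_
    have : 0 ≤ 4 * B / √H := by positivity
    have e : 2 * π * B * (4 / √H) = 2 * π * (4 * B / √H) := by ring
    rw [e]
    apply mul_le_mul_of_nonneg_right _ this
    nlinarith
  exact le_of_mul_le_mul_left h3 (by positivity)

lemma psi_sum (f : ℕ → ℝ) (N : ℕ) (B : ℝ) (hB : 0 ≤ B)
    (hS : ∀ h : ℕ, 1 ≤ h → ‖∑ n ∈ Finset.range N, ee (h * f n)‖ ≤ B * √h)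
    (H : ℕ) (hH : 1 ≤ H) :
    |∑ n ∈ Finset.range N, (Int.fract (f n) - 1/2)| ≤ N / H + 4 * B * √H := by
  have hH' : (1:ℝ) ≤ H := by exact_mod_cast hH
  have hHs : √(H:ℝ) * √H = H := Real.mul_self_sqrt (by linarith)
  have hsp : 0 < √(H:ℝ) := Real.sqrt_pos.mpr (by linarith)
  have hD0 : (0:ℝ) < 1 / H := by positivity
  have hD1 : (1:ℝ) / H ≤ 1 := by rw [div_le_one (by linarith)]; exact hH'
  have p1 := FF_diff_sum f N B hB hS H hH (1/H) (abs_of_pos hD0)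
  have p2 := FF_diff_sum f N B hB hS H hH (-(1/H)) (by rw [abs_neg]; exact abs_of_pos hD0)
  have eB : 4 * B / √H * H = 4 * B * √H := by
    nth_rewrite 2 [← hHs]; field_simp
  rw [abs_le] at p1 p2 ⊢
  constructor
  · have : ∑ n ∈ Finset.range N, ((FF (f n + 1/H) - FF (f n)) * H - 1/H) ≤ ∑ n ∈ Finset.range N, (Int.fract (f n) - 1/2) := by
      apply Finset.sum_le_sum
      intro n _
      have := psi_lower (f n) (1/H) hD0 hD1
      rwa [div_div_eq_mul_div, div_one] at this
    rw [Finset.sum_sub_distrib, ← Finset.sum_mul, Finset.sum_const, nsmul_eq_mul, Finset.card_range, mul_one_div] at this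
    have : -(4 * B / √H) * H ≤ (∑ n ∈ Finset.range N, (FF (f n + 1/H) - FF (f n))) * H :=
      mul_le_mul_of_nonneg_right p1.1 (by positivity)
    linarith
  · have : ∑ n ∈ Finset.range N, (Int.fract (f n) - 1/2) ≤ ∑ n ∈ Finset.range N, (-(FF (f n + -(1/H)) - FF (f n)) * H + 1/H) := by
      apply Finset.sum_le_sum
      intro n _
      have := psi_upper (f n) (1/H) hD0 hD1
      rw [div_div_eq_mul_div, div_one] at this
      rw [← sub_eq_add_neg]
      linarith
    rw [Finset.sum_add_distrib, ← Finset.sum_mul, Finset.sum_neg_distrib, Finset.sum_const, nsmul_eq_mul, Finset.card_range, mul_one_div] at this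
    have : -(4 * B / √H) * H ≤ (∑ n ∈ Finset.range N, (FF (f n + -(1/H)) - FF (f n))) * H :=
      mul_le_mul_of_nonneg_right p2.1 (by positivity)
    linarith


lemma sq_le_imp {a b : ℝ} (h : a^2 ≤ b^2) (hb : 0 ≤ b) : a ≤ b := by
  nlinarith [sq_nonneg (a+b), sq_nonneg (a-b)]

noncomputable def sx (x u : ℝ) : ℝ := √(x - u^2)

lemma sx_facts {x y u : ℝ} (hy : 0 < y) (hxy : x = 2 * y^2) (hu0 : 0 ≤ u) (hu : u ≤ y) :
    y ≤ sx x u ∧ sx x u ^ 2 = x - u^2 := by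
  have h : y^2 ≤ x - u^2 := by nlinarith
  exact ⟨Real.le_sqrt_of_sq_le h, Real.sq_sqrt (by nlinarith)⟩

lemma sx_second {x y R u : ℝ} (hy : 0 < y) (hxy : x = 2 * y^2) (hR : 0 < R) (hxR : x = R^2)
    (hu0 : 0 ≤ u) (hu : u + 2 ≤ y) :
    1 / R ≤ 2 * sx x (u+1) - sx x u - sx x (u+2) ∧
    2 * sx x (u+1) - sx x u - sx x (u+2) ≤ 3 / R := by
  obtain ⟨a0, b0⟩ := sx_facts hy hxy hu0 (by linarith : u ≤ y)
  obtain ⟨a1, b1⟩ := sx_facts hy hxy (by linarith : 0 ≤ u+1) (by linarith : u+1 ≤ y)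
  obtain ⟨a2, b2⟩ := sx_facts hy hxy (by linarith : 0 ≤ u+2) (by linarith : u+2 ≤ y)
  generalize sx x u = s0 at *
  generalize sx x (u+1) = s1 at *
  generalize sx x (u+2) = s2 at *
  have p0 : 0 < s0 := by linarith
  have p1 : 0 < s1 := by linarith
  have p2 : 0 < s2 := by linarith
  have c1 : s1 ≤ R := by apply sq_le_imp _ hR.le; nlinarith
  have c2 : s2 ≤ R := by apply sq_le_imp _ hR.le; nlinarith
  have d02 : s0 - s2 = (4*u+4)/(s0+s2) := by
    rw [eq_div_iff (by positivity)]; nlinarith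
  have d : 2 * s1 - s0 - s2 = 2/(s1+s2) + (2*u+1)*((4*u+4)/(s0+s2))/((s1+s2)*(s0+s1)) := by
    rw [← d02]
    field_simp
    nlinarith
  rw [d]
  have hRy : R ≤ 3/2 * y := by apply sq_le_imp _ (by positivity); nlinarith
  constructor
  · have t1 : 1 / R ≤ 2/(s1+s2) := by
      rw [div_le_div_iff₀ hR (by positivity)]; linarith
    have t2 : 0 ≤ (2*u+1)*((4*u+4)/(s0+s2))/((s1+s2)*(s0+s1)) := by positivity
    linarith
  · have t1 : 2/(s1+s2) ≤ 1/y := by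
      rw [div_le_div_iff₀ (by positivity) hy]; linarith
    have t3 : (4*u+4)/(s0+s2) ≤ 2 := by
      rw [div_le_iff₀ (by positivity)]; linarith
    have t2 : (2*u+1)*((4*u+4)/(s0+s2))/((s1+s2)*(s0+s1)) ≤ 1/y := by
      rw [div_le_div_iff₀ (by positivity) hy]
      have q : 0 ≤ (4*u+4)/(s0+s2) := by positivity
      have w1 : (2*u+1)*((4*u+4)/(s0+s2)) ≤ 2 * y * 2 := by
        apply mul_le_mul (by linarith) t3 q (by positivity)
      have w2 : (2*y)*(2*y) ≤ (s1+s2)*(s0+s1) := by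
        apply mul_le_mul (by linarith) (by linarith) (by positivity) (by positivity)
      have w3 := mul_le_mul_of_nonneg_right w1 hy.le
      linarith
    have t4 : 1 / y ≤ (3/2)/R := by
      rw [div_le_div_iff₀ hy hR]; linarith
    have : 3 / R = (3/2)/R + (3/2)/R := by ring
    linarith

lemma ee_neg_sum_norm (f : ℕ → ℝ) (N : ℕ) :
    ‖∑ n ∈ Finset.range N, ee (f n)‖ = ‖∑ n ∈ Finset.range N, ee (-(f n))‖ := by
  rw [← Complex.norm_conj, map_sum]
  congr 1
  apply Finset.sum_congr rfl
  intro n _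
  unfold ee
  rw [← Complex.exp_conj]
  congr 1
  rw [map_mul, Complex.conj_ofReal, Complex.conj_I]
  push_cast
  ring

lemma psi_circle (x y R : ℝ) (hx : 1 ≤ x) (hy : 0 < y) (hxy : x = 2 * y^2) (hR : 0 < R) (hxR : x = R^2)
    (M : ℕ) (hM : (M:ℝ) ≤ y) :
    |∑ n ∈ Finset.range M, (Int.fract (sx x n) - 1/2)| ≤ 300 * x^((1:ℝ)/3) := by
  have hyR : y ≤ R := by apply sq_le_imp _ hR.le; nlinarith
  set u := x^((1:ℝ)/12) with hu
  have hu1 : 1 ≤ u := Real.one_le_rpow hx (by norm_num)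
  have hpow : ∀ k : ℕ, u^k = x^((k:ℝ)/12) := by
    intro k
    rw [hu, ← Real.rpow_natCast, ← Real.rpow_mul (by linarith)]
    congr 1; ring
  have hx3 : x^((1:ℝ)/3) = u^4 := by rw [hpow]; norm_num
  have hR6 : R = u^6 := by
    have : x = (u^6)^2 := by rw [← pow_mul, hpow]; norm_num
    rw [this] at hxR
    exact ((sq_eq_sq₀ (by positivity) hR.le).mp hxR).symm
  have hsR : √R = u^3 := by
    rw [hR6, show u^6 = (u^3)^2 by ring, Real.sqrt_sq (by positivity)]
  have hS : ∀ h : ℕ, 1 ≤ h → ‖∑ n ∈ Finset.range M, ee (h * sx x n)‖ ≤ (30 * √R) * √h := by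
    intro h hh
    have hh' : (1:ℝ) ≤ h := by exact_mod_cast hh
    rw [ee_neg_sum_norm]
    have sec : ∀ n : ℕ, n + 1 < M → 1 / R ≤ 2 * sx x (n+1:ℕ) - sx x n - sx x (n+2:ℕ) ∧ 2 * sx x (n+1:ℕ) - sx x n - sx x (n+2:ℕ) ≤ 3 / R := by
      intro n hn
      have : (n:ℝ) + 2 ≤ y := by
        refine le_trans ?_ hM
        exact_mod_cast hn
      have := sx_second hy hxy hR hxR (Nat.cast_nonneg n) this
      push_cast
      exact this
    have := second_deriv_test (fun n => -(h * sx x n)) M (h / R) 3 (by positivity) (by norm_num)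
      (fun n hn => by
        have := (sec n hn).1
        have e : (h:ℝ) / R = h * (1 / R) := by ring
        rw [e]
        have := mul_le_mul_of_nonneg_left this (by linarith : (0:ℝ) ≤ h)
        linarith)
      (fun n hn => by
        have := (sec n hn).2
        have e : 3 * ((h:ℝ) / R) = h * (3 / R) := by ring
        rw [e]
        have := mul_le_mul_of_nonneg_left this (by linarith : (0:ℝ) ≤ h)
        linarith)
    refine this.trans ?_
    rw [Real.sqrt_div (by linarith)]
    have hs : 0 < √(h:ℝ) := Real.sqrt_pos.mpr (by linarith)
    have hss : √(h:ℝ) * √h = h := Real.mul_self_sqrt (by linarith)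
    have hr : 0 < √R := Real.sqrt_pos.mpr hR
    have e : 3 * ((h:ℝ) / R) * M + 2 ≤ 5 * h := by
      have : (h:ℝ) / R * M ≤ h := by
        rw [div_mul_eq_mul_div, div_le_iff₀ hR]
        apply mul_le_mul_of_nonneg_left (hM.trans hyR) (by linarith)
      linarith
    calc _ ≤ (5 * h) * (6 / (√h / √R)) := by
          apply mul_le_mul_of_nonneg_right e (by positivity)
      _ = _ := by
          nth_rewrite 1 [← hss]
          field_simp
          norm_num
  have hceil := Nat.ceil_lt_add_one (by positivity : 0 ≤ u^2)
  have hH1 : 1 ≤ ⌈u^2⌉₊ := Nat.one_le_ceil_iff.mpr (by positivity)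
  have hle := Nat.le_ceil (u^2)
  have := psi_sum (fun n => sx x n) M (30 * √R) (by positivity) hS ⌈u^2⌉₊ hH1
  refine this.trans ?_
  rw [hx3, hsR]
  have hu2 : 1 ≤ u^2 := one_le_pow₀ hu1
  have t1 : (M:ℝ) / ⌈u^2⌉₊ ≤ u^4 := by
    rw [div_le_iff₀ (by linarith)]
    calc (M:ℝ) ≤ u^6 := by rw [← hR6]; linarith
      _ = u^4 * u^2 := by ring
      _ ≤ _ := mul_le_mul_of_nonneg_left hle (by positivity)
  have t2 : √(⌈u^2⌉₊ : ℝ) ≤ 2 * u := by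
    rw [Real.sqrt_le_left (by positivity)]
    nlinarith
  have t3 : 4 * (30 * u^3) * √(⌈u^2⌉₊ : ℝ) ≤ 4 * (30 * u^3) * (2 * u) := mul_le_mul_of_nonneg_left t2 (by positivity)
  have : 0 < u^4 := by positivity
  nlinarith


lemma sx_cont (x : ℝ) : Continuous (sx x) := by unfold sx; fun_prop

lemma chord {x y : ℝ} (hy : 0 < y) (hxy : x = 2 * y^2) {n t : ℝ} (hn : 0 ≤ n) (hn1 : n + 1 ≤ y)
    (ht0 : 0 ≤ t) (ht1 : t ≤ 1) :
    |sx x (n+t) - ((1-t) * sx x n + t * sx x (n+1))| ≤ 1 / y := by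
  obtain ⟨a0, b0⟩ := sx_facts hy hxy hn (by linarith : n ≤ y)
  obtain ⟨a1, b1⟩ := sx_facts hy hxy (by linarith : 0 ≤ n+1) (by linarith : n+1 ≤ y)
  obtain ⟨a2, b2⟩ := sx_facts hy hxy (by linarith : 0 ≤ n+t) (by linarith : n+t ≤ y)
  generalize sx x n = s0 at *
  generalize sx x (n+1) = s1 at *
  generalize sx x (n+t) = s at *
  have p0 : 0 < s0 := by linarith
  have p1 : 0 < s1 := by linarith
  have p2 : 0 < s := by linarith
  have d01 : s0 - s1 = (2*n+1)/(s0+s1) := by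
    rw [eq_div_iff (by positivity)]; linarith
  have e0 : s - s0 = -(2*n*t+t^2)/(s+s0) := by
    rw [eq_div_iff (by positivity)]; linarith
  have e1 : s - s1 = (1-t)*(2*n+1+t)/(s+s1) := by
    rw [eq_div_iff (by positivity)]; linarith
  have key : s - ((1-t) * s0 + t * s1) = t*(1-t)*(1/(s+s1) + (2*n+t)*((2*n+1)/(s0+s1))/((s+s1)*(s+s0))) := by
    have : s - ((1-t) * s0 + t * s1) = (1-t)*(s - s0) + t * (s - s1) := by ring
    rw [this, e0, e1, ← d01]
    field_simp
    ring
  have f1 : 1/(s+s1) ≤ (1/2)/y := by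
    rw [div_le_div_iff₀ (by positivity) hy]; linarith
  have f3 : (2*n+1)/(s0+s1) ≤ 1 := by
    rw [div_le_iff₀ (by positivity)]; linarith
  have f2 : (2*n+t)*((2*n+1)/(s0+s1))/((s+s1)*(s+s0)) ≤ (1/2)/y := by
    rw [div_le_div_iff₀ (by positivity) hy]
    have w1 : (2*n+t)*((2*n+1)/(s0+s1)) ≤ 2 * y * 1 := by
      apply mul_le_mul (by linarith) f3 (by positivity) (by positivity)
    have w2 : (2*y)*(2*y) ≤ (s+s1)*(s+s0) := by
      apply mul_le_mul (by linarith) (by linarith) (by positivity) (by positivity)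
    have w3 := mul_le_mul_of_nonneg_right w1 hy.le
    linarith
  have g0 : 0 ≤ t*(1-t) := mul_nonneg ht0 (by linarith)
  have g1 : t*(1-t) ≤ 1 := by nlinarith
  have q0 : 0 ≤ 1/(s+s1) + (2*n+t)*((2*n+1)/(s0+s1))/((s+s1)*(s+s0)) := by positivity
  rw [key, abs_of_nonneg (mul_nonneg g0 q0)]
  have : 1 / y = (1/2)/y + (1/2)/y := by ring
  calc _ ≤ 1 * (1/(s+s1) + (2*n+t)*((2*n+1)/(s0+s1))/((s+s1)*(s+s0))) := mul_le_mul_of_nonneg_right g1 q0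
    _ ≤ _ := by linarith

lemma trap1 {x y : ℝ} (hy : 0 < y) (hxy : x = 2 * y^2) {n : ℝ} (hn : 0 ≤ n) (hn1 : n + 1 ≤ y) :
    |(∫ u in n..(n+1), sx x u) - (sx x n + sx x (n+1))/2| ≤ 1 / y := by
  have h1 : (∫ u in n..(n+1), sx x u) = ∫ t in (0:ℝ)..1, sx x (n + t) := by
    rw [intervalIntegral.integral_comp_add_left (fun u => sx x u)]; simp
  have h2 : (sx x n + sx x (n+1))/2 = ∫ t in (0:ℝ)..1, ((1-t) * sx x n + t * sx x (n+1)) := by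
    rw [intervalIntegral.integral_add (by apply Continuous.intervalIntegrable; fun_prop) (by apply Continuous.intervalIntegrable; fun_prop)]
    rw [intervalIntegral.integral_mul_const, intervalIntegral.integral_mul_const,
      intervalIntegral.integral_sub (by simp) (by simp)]
    simp
    ring
  have hc := sx_cont x
  rw [h1, h2, ← intervalIntegral.integral_sub (by apply Continuous.intervalIntegrable; fun_prop) (by apply Continuous.intervalIntegrable; fun_prop)]
  have := intervalIntegral.norm_integral_le_of_norm_le_const (a := (0:ℝ)) (b := 1) (C := 1 / y)
    (f := fun t => sx x (n+t) - ((1-t) * sx x n + t * sx x (n+1)))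
    (fun t ht => by
      rw [Set.uIoc_of_le zero_le_one] at ht
      exact chord hy hxy hn hn1 ht.1.le ht.2)
  simpa using this

lemma trapM {x y : ℝ} (hy : 0 < y) (hxy : x = 2 * y^2) (M : ℕ) (hM : (M:ℝ) ≤ y) :
    |(∫ u in (0:ℝ)..M, sx x u) - (∑ n ∈ Finset.range M, sx x n - sx x 0 / 2 + sx x M / 2)| ≤ 1 := by
  have hc := sx_cont x
  have key : ∀ m : ℕ, m ≤ M →
      |(∫ u in (0:ℝ)..m, sx x u) - (∑ n ∈ Finset.range m, sx x n - sx x 0 / 2 + sx x m / 2)| ≤ m * (1 / y) := by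
    intro m
    induction m with
    | zero => intro _; simp
    | succ m ih =>
      intro hm
      have i := ih (by omega)
      have hmy : (m:ℝ) + 1 ≤ y := by refine le_trans ?_ hM; exact_mod_cast hm
      have t := trap1 hy hxy (Nat.cast_nonneg m) hmy
      have split : (∫ u in (0:ℝ)..((m+1:ℕ):ℝ), sx x u) = (∫ u in (0:ℝ)..m, sx x u) + ∫ u in (m:ℝ)..(m+1), sx x u := by
        push_cast
        rw [intervalIntegral.integral_add_adjacent_intervals] <;> exact hc.intervalIntegrable _ _
      rw [split, Finset.sum_range_succ]
      push_cast
      rw [abs_le] at *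
      constructor <;> linarith [i.1, i.2, t.1, t.2]
  refine (key M le_rfl).trans ?_
  rw [mul_one_div, div_le_one hy]; exact hM

noncomputable def kap : ℝ := ∫ v in (0:ℝ)..(1/√2), sx 1 v

lemma kap_ge : 1/2 ≤ kap := by
  have hs : √(2:ℝ) * √2 = 2 := Real.mul_self_sqrt (by norm_num)
  have hp : 0 < √(2:ℝ) := by positivity
  have h : (∫ v in (0:ℝ)..(1/√2), (1/√2 : ℝ)) ≤ kap := by
    apply intervalIntegral.integral_mono_on (by positivity) (by simp) ((sx_cont 1).intervalIntegrable _ _)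
    intro v hv
    have hxy : (1:ℝ) = 2 * (1/√2)^2 := by
      rw [div_pow, Real.sq_sqrt (by norm_num)]; norm_num
    exact (sx_facts (by positivity) hxy hv.1 hv.2).1
  simp only [intervalIntegral.integral_const, sub_zero, smul_eq_mul] at h
  have : 1/√2 * (1/√(2:ℝ)) = 1/2 := by
    rw [div_mul_div_comm, hs]; norm_num
  linarith

lemma int_full {x y R : ℝ} (hy : 0 < y) (hxy : x = 2 * y^2) (hR : 0 < R) (hxR : x = R^2) :
    (∫ u in (0:ℝ)..y, sx x u) = kap * x := by
  have hyR : y = R * (1/√2) := by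
    have hs : √(2:ℝ) * √2 = 2 := Real.mul_self_sqrt (by norm_num)
    apply (sq_eq_sq₀ hy.le (by positivity)).mp
    rw [mul_pow, div_pow, Real.sq_sqrt (by norm_num)]; linarith
  have h := intervalIntegral.smul_integral_comp_mul_left (a := (0:ℝ)) (b := 1/√2) (fun u => sx x u) R
  rw [mul_zero, ← hyR] at h
  rw [← h]
  have e : ∀ v, sx x (R * v) = R * sx 1 v := by
    intro v
    unfold sx
    rw [show x - (R*v)^2 = R^2 * (1 - v^2) by rw [hxR]; ring, Real.sqrt_mul (by positivity), Real.sqrt_sq hR.le]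
  simp only [e, intervalIntegral.integral_const_mul, smul_eq_mul]
  rw [hxR]; unfold kap; ring

lemma int_tail {x y : ℝ} (hy : 0 < y) (hxy : x = 2 * y^2) (M : ℕ) (hM : (M:ℝ) ≤ y) (hM1 : y < M + 1) :
    |(∫ u in (M:ℝ)..y, sx x u) - (y - M) * y| ≤ 1 ∧ |sx x M - y| ≤ 1 := by
  have hb : ∀ u, (M:ℝ) ≤ u → u ≤ y → |sx x u - y| ≤ 1 := by
    intro u hu huy
    have hu0 : 0 ≤ u := le_trans (Nat.cast_nonneg _) hu
    obtain ⟨a, b⟩ := sx_facts hy hxy hu0 huy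
    rw [abs_of_nonneg (by linarith)]
    nlinarith
  refine ⟨?_, hb M le_rfl hM⟩
  have hc := sx_cont x
  have e : (y - M) * y = ∫ u in (M:ℝ)..y, y := by simp
  rw [e, ← intervalIntegral.integral_sub (hc.intervalIntegrable _ _) (by simp)]
  have := intervalIntegral.norm_integral_le_of_norm_le_const (a := (M:ℝ)) (b := y) (C := 1)
    (f := fun u => sx x u - y)
    (fun t ht => by
      rw [Set.uIoc_of_le hM] at ht
      exact hb t ht.1.le ht.2)
  rw [Real.norm_eq_abs] at this
  refine this.trans ?_
  rw [abs_of_nonneg (by linarith)]; linarith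

/-- lattice points in a quadrant -/
noncomputable def quad (x : ℝ) : Finset (ℕ × ℕ) :=
  ((Finset.Icc 1 ⌊x⌋₊) ×ˢ (Finset.Icc 0 ⌊x⌋₊)).filter (fun p => ((p.1^2 + p.2^2 : ℕ) : ℝ) ≤ x)

lemma nat_le_floor_of_sq {x : ℝ} {a b : ℕ} (h : ((a^2 + b^2 : ℕ) : ℝ) ≤ x) : a ≤ ⌊x⌋₊ ∧ b ≤ ⌊x⌋₊ := by
  constructor <;> apply Nat.le_floor <;> refine le_trans ?_ h <;> norm_cast <;> nlinarith

lemma le_sx_iff {x : ℝ} {a b : ℕ} (hb : 1 ≤ b) : b ≤ ⌊sx x a⌋₊ ↔ ((a^2 + b^2 : ℕ) : ℝ) ≤ x := by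
  rw [Nat.le_floor_iff' (by omega), sx, Real.le_sqrt' (by exact_mod_cast hb)]
  push_cast
  constructor <;> intro h <;> linarith

lemma quad_card (x y : ℝ) (hy : 0 < y) (hxy : x = 2 * y^2) (M : ℕ) (hM : (M:ℝ) ≤ y) (hM1 : y < M + 1) :
    (quad x).card + M^2 = ⌊sx x 0⌋₊ + 2 * ∑ n ∈ Finset.range M, ⌊sx x (n+1:ℕ)⌋₊ := by
  classical
  set K := ⌊x⌋₊ with hK
  -- both ≥ 1
  set A := ((Finset.Icc 1 K) ×ˢ (Finset.Icc 1 K)).filter (fun p : ℕ × ℕ => ((p.1^2 + p.2^2 : ℕ) : ℝ) ≤ x ∧ p.1 ≤ M) with hA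
  set B := ((Finset.Icc 1 K) ×ˢ (Finset.Icc 1 K)).filter (fun p : ℕ × ℕ => ((p.1^2 + p.2^2 : ℕ) : ℝ) ≤ x ∧ p.2 ≤ M) with hB
  set Z := ((Finset.Icc 1 K) ×ˢ ({0} : Finset ℕ)).filter (fun p : ℕ × ℕ => ((p.1^2 + p.2^2 : ℕ) : ℝ) ≤ x) with hZ
  have hq : quad x = Z ∪ (A ∪ B) := by
    ext ⟨a, b⟩
    simp only [quad, hZ, hA, hB, Finset.mem_union, Finset.mem_filter, Finset.mem_product, Finset.mem_Icc, Finset.mem_singleton]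
    constructor
    · rintro ⟨⟨⟨h1, h2⟩, h3, h4⟩, h5⟩
      rcases Nat.eq_zero_or_pos b with hb | hb
      · left; exact ⟨⟨⟨h1, h2⟩, hb⟩, h5⟩
      · right
        by_cases ha : a ≤ M
        · left; exact ⟨⟨⟨h1, h2⟩, hb, h4⟩, h5, ha⟩
        · right
          refine ⟨⟨⟨h1, h2⟩, hb, h4⟩, h5, ?_⟩
          by_contra hbM
          have e1 : (M:ℝ) + 1 ≤ a := by exact_mod_cast (by omega : M + 1 ≤ a)
          have e2 : (M:ℝ) + 1 ≤ b := by exact_mod_cast (by omega : M + 1 ≤ b)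
          push_cast at h5
          nlinarith
    · rintro (⟨⟨⟨h1, h2⟩, hb⟩, h5⟩ | ⟨⟨⟨h1, h2⟩, hb, h4⟩, h5, ha⟩ | ⟨⟨⟨h1, h2⟩, hb, h4⟩, h5, ha⟩)
      · exact ⟨⟨⟨h1, h2⟩, by omega, by omega⟩, h5⟩
      · exact ⟨⟨⟨h1, h2⟩, by omega, by omega⟩, h5⟩
      · exact ⟨⟨⟨h1, h2⟩, by omega, by omega⟩, h5⟩
  have hdisj : Disjoint Z (A ∪ B) := by
    rw [Finset.disjoint_left]
    rintro ⟨a, b⟩ h1 h2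
    simp only [hZ, hA, hB, Finset.mem_union, Finset.mem_filter, Finset.mem_product, Finset.mem_Icc, Finset.mem_singleton] at h1 h2
    rcases h2 with h2 | h2 <;> omega
  have hinter : A ∩ B = (Finset.Icc 1 M) ×ˢ (Finset.Icc 1 M) := by
    ext ⟨a, b⟩
    simp only [hA, hB, Finset.mem_inter, Finset.mem_filter, Finset.mem_product, Finset.mem_Icc]
    constructor
    · rintro ⟨⟨⟨⟨h1, h2⟩, hb, h4⟩, h5, ha⟩, ⟨⟨_, _⟩, _, hbM⟩⟩
      exact ⟨⟨h1, ha⟩, hb, hbM⟩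
    · rintro ⟨⟨h1, ha⟩, hb, hbM⟩
      have h5 : ((a^2 + b^2 : ℕ) : ℝ) ≤ x := by
        have e1 : (a:ℝ) ≤ y := le_trans (by exact_mod_cast ha) hM
        have e2 : (b:ℝ) ≤ y := le_trans (by exact_mod_cast hbM) hM
        push_cast
        have := Nat.cast_nonneg (α := ℝ) a
        have := Nat.cast_nonneg (α := ℝ) b
        nlinarith
      have := nat_le_floor_of_sq h5
      exact ⟨⟨⟨⟨h1, this.1⟩, hb, this.2⟩, h5, ha⟩, ⟨⟨⟨h1, this.1⟩, hb, this.2⟩, h5, hbM⟩⟩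
  have hZc : Z.card = ⌊sx x 0⌋₊ := by
    have : Z = (Finset.Icc 1 ⌊sx x 0⌋₊).image (fun a => (a, 0)) := by
      ext ⟨a, b⟩
      simp only [hZ, Finset.mem_filter, Finset.mem_product, Finset.mem_Icc, Finset.mem_singleton, Finset.mem_image, Prod.mk.injEq]
      constructor
      · rintro ⟨⟨⟨h1, h2⟩, hb⟩, h5⟩
        refine ⟨a, ⟨h1, ?_⟩, rfl, hb.symm⟩
        have := (le_sx_iff (x := x) (a := 0) (b := a) h1).mpr (by subst hb; simpa using h5)
        simpa using this
      · rintro ⟨a', ⟨h1, h2⟩, rfl, rfl⟩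
        have := (le_sx_iff (x := x) (a := 0) (b := a') h1).mp (by simpa using h2)
        exact ⟨⟨⟨h1, (nat_le_floor_of_sq this).2⟩, rfl⟩, by simpa using this⟩
    rw [this, Finset.card_image_of_injective _ (fun a b h => by simpa using h), Nat.card_Icc]; omega
  have hAc : A.card = ∑ n ∈ Finset.range M, ⌊sx x (n+1:ℕ)⌋₊ := by
    have : A = (Finset.range M).biUnion (fun n => (Finset.Icc 1 ⌊sx x (n+1:ℕ)⌋₊).image (fun b => (n+1, b))) := by
      ext ⟨a, b⟩
      simp only [hA, Finset.mem_filter, Finset.mem_product, Finset.mem_Icc, Finset.mem_biUnion, Finset.mem_range, Finset.mem_image, Prod.mk.injEq]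
      constructor
      · rintro ⟨⟨⟨h1, h2⟩, hb, h4⟩, h5, ha⟩
        refine ⟨a - 1, by omega, b, ⟨hb, ?_⟩, by omega, rfl⟩
        rw [show a - 1 + 1 = a by omega]
        exact (le_sx_iff hb).mpr h5
      · rintro ⟨n, hn, b', ⟨h1, h2⟩, rfl, rfl⟩
        have h5 := (le_sx_iff h1).mp h2
        have := nat_le_floor_of_sq h5
        exact ⟨⟨⟨by omega, this.1⟩, h1, this.2⟩, h5, by omega⟩
    rw [this, Finset.card_biUnion]
    · apply Finset.sum_congr rfl
      intro n _
      rw [Finset.card_image_of_injective _ (fun a b h => by simpa using h), Nat.card_Icc]; omega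
    · intro i _ j _ hij
      simp only [Finset.disjoint_left, Finset.mem_image]
      rintro ⟨a, b⟩ ⟨b1, _, h1⟩ ⟨b2, _, h2⟩
      simp only [Prod.mk.injEq] at h1 h2
      omega
  have hBA : B.card = A.card := by
    apply Finset.card_bij (fun p _ => (p.2, p.1))
    · rintro ⟨a, b⟩ h
      simp only [hA, hB, Finset.mem_filter, Finset.mem_product] at h ⊢
      exact ⟨⟨h.1.2, h.1.1⟩, by rw [add_comm]; exact h.2.1, h.2.2⟩
    · rintro ⟨a, b⟩ _ ⟨c, d⟩ _ h
      simp only [Prod.mk.injEq] at h ⊢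
      exact ⟨h.2, h.1⟩
    · rintro ⟨a, b⟩ h
      simp only [hA, hB, Finset.mem_filter, Finset.mem_product] at h ⊢
      exact ⟨(b, a), ⟨⟨h.1.2, h.1.1⟩, by rw [add_comm]; exact h.2.1, h.2.2⟩, rfl⟩
  have hu := Finset.card_union_add_card_inter A B
  rw [hinter, Finset.card_product, Nat.card_Icc, Nat.add_sub_cancel] at hu
  rw [hq, Finset.card_union_of_disjoint hdisj, hZc, ← hAc]
  nlinarith

lemma fract_floor {t : ℝ} (ht : 0 ≤ t) : (⌊t⌋₊ : ℝ) = t - Int.fract t := by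
  rw [natCast_floor_eq_intCast_floor ht]
  have := Int.floor_add_fract t
  linarith

theorem gauss_circle (x : ℝ) (hx : 1 ≤ x) :
    |((quad x).card : ℝ) - (2 * kap - 1/2) * x| ≤ 620 * x^((1:ℝ)/3) := by
  obtain ⟨y, hy, hxy⟩ : ∃ y : ℝ, 0 < y ∧ x = 2 * y^2 :=
    ⟨√(x/2), Real.sqrt_pos.mpr (by linarith), by rw [Real.sq_sqrt (by linarith)]; ring⟩
  obtain ⟨R, hR, hxR⟩ : ∃ R : ℝ, 0 < R ∧ x = R^2 :=
    ⟨√x, Real.sqrt_pos.mpr (by linarith), by rw [Real.sq_sqrt (by linarith)]⟩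
  set M := ⌊y⌋₊ with hMdef
  have hM : (M:ℝ) ≤ y := Nat.floor_le hy.le
  have hM1 : y < M + 1 := Nat.lt_floor_add_one y
  have hcard := quad_card x y hy hxy M hM hM1
  have hcard' : ((quad x).card : ℝ) + M^2 = ⌊sx x 0⌋₊ + 2 * ∑ n ∈ Finset.range M, (⌊sx x (n+1:ℕ)⌋₊ : ℝ) := by exact_mod_cast hcard
  have hshift : ∑ n ∈ Finset.range M, (⌊sx x (n+1:ℕ)⌋₊ : ℝ) = ∑ n ∈ Finset.range M, (⌊sx x n⌋₊ : ℝ) + ⌊sx x M⌋₊ - ⌊sx x 0⌋₊ := by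
    have a := Finset.sum_range_succ (fun n : ℕ => (⌊sx x n⌋₊ : ℝ)) M
    have b := Finset.sum_range_succ' (fun n : ℕ => (⌊sx x n⌋₊ : ℝ)) M
    simp only [Nat.cast_zero] at b
    linarith
  have hpos : ∀ u, 0 ≤ sx x u := fun u => Real.sqrt_nonneg _
  have hsumf : ∑ n ∈ Finset.range M, (⌊sx x n⌋₊ : ℝ) = ∑ n ∈ Finset.range M, sx x n - ∑ n ∈ Finset.range M, (Int.fract (sx x n) - 1/2) - M / 2 := by
    rw [Finset.sum_sub_distrib, Finset.sum_const, Finset.card_range, nsmul_eq_mul]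
    rw [Finset.sum_congr rfl (fun (n : ℕ) _ => fract_floor (hpos (n:ℝ))), Finset.sum_sub_distrib]
    ring
  have hpsi := psi_circle x y R hx hy hxy hR hxR M hM
  have htrap := trapM hy hxy M hM
  have hfull := int_full hy hxy hR hxR
  obtain ⟨htail, hsM⟩ := int_tail hy hxy M hM hM1
  have hc := sx_cont x
  have hadd : (∫ u in (0:ℝ)..M, sx x u) + (∫ u in (M:ℝ)..y, sx x u) = ∫ u in (0:ℝ)..y, sx x u :=
    intervalIntegral.integral_add_adjacent_intervals (hc.intervalIntegrable _ _) (hc.intervalIntegrable _ _)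
  rw [hshift, hsumf, fract_floor (hpos M), fract_floor (hpos 0)] at hcard'
  have f0 := Int.fract_nonneg (sx x 0)
  have f0' := Int.fract_lt_one (sx x 0)
  have fM := Int.fract_nonneg (sx x M)
  have fM' := Int.fract_lt_one (sx x M)
  have hx3 : 1 ≤ x^((1:ℝ)/3) := Real.one_le_rpow hx (by norm_num)
  rw [hfull] at hadd
  generalize x^((1:ℝ)/3) = X at *
  generalize (∫ u in (0:ℝ)..M, sx x u) = I1 at *
  generalize (∫ u in (M:ℝ)..y, sx x u) = I2 at *
  generalize ∑ n ∈ Finset.range M, (Int.fract (sx x n) - 1/2) = Ps at *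
  generalize ∑ n ∈ Finset.range M, sx x n = Sg at *
  have hd0 : 0 ≤ y - M := by linarith
  have hd1 : y - M ≤ 1 := by linarith
  have hdd : (y - M)^2 ≤ 1 := by nlinarith
  have hdd0 : 0 ≤ (y - M)^2 := sq_nonneg _
  rw [abs_le] at *
  constructor <;> nlinarith



noncomputable def giBasis : Module.Basis (Fin 2) ℤ GaussianInt :=
  Module.Basis.ofEquivFun
    { toFun := fun z => ![z.re, z.im]
      invFun := fun v => ⟨v 0, v 1⟩
      map_add' := by intro a b; ext i; fin_cases i <;> simp
      map_smul' := by intro a b; ext i; fin_cases i <;> simp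
      left_inv := by intro z; simp
      right_inv := by intro v; ext i; fin_cases i <;> simp }

instance giFinite : Module.Finite ℤ GaussianInt := .of_basis giBasis
instance giFree : Module.Free ℤ GaussianInt := .of_basis giBasis

lemma normI_eq (I : Ideal GaussianInt) : normI I = Ideal.absNorm I := by
  rw [Ideal.absNorm_apply, Submodule.cardQuot_apply]; rfl

lemma gi_norm (z : GaussianInt) : Algebra.norm ℤ z = z.re^2 + z.im^2 := by
  rw [Algebra.norm_eq_matrix_det giBasis, Matrix.det_fin_two]
  simp only [Algebra.leftMulMatrix_eq_repr_mul, giBasis]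
  simp
  ring

lemma normI_span (z : GaussianInt) : (normI (Ideal.span {z}) : ℤ) = z.re^2 + z.im^2 := by
  rw [normI_eq, Ideal.absNorm_span_singleton, gi_norm]
  rw [Int.natAbs_of_nonneg (by positivity)]

lemma normI_mul (I J : Ideal GaussianInt) : normI (I * J) = normI I * normI J := by
  simp [normI_eq]

lemma normI_pos {I : Ideal GaussianInt} (h : I ≠ ⊥) : 0 < normI I := by
  rw [normI_eq]; exact Nat.pos_of_ne_zero (fun h' => h (Ideal.absNorm_eq_zero_iff.mp h'))

/-- nonzero ideals of norm at most x -/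
def SI (x : ℝ) : Set (Ideal GaussianInt) := {I | I ≠ ⊥ ∧ (normI I : ℝ) ≤ x}

lemma unit_cases {u : GaussianInt} (hu : IsUnit u) :
    (u.re = 1 ∧ u.im = 0) ∨ (u.re = -1 ∧ u.im = 0) ∨ (u.re = 0 ∧ u.im = 1) ∨ (u.re = 0 ∧ u.im = -1) := by
  have h := (Zsqrtd.norm_eq_one_iff' (by norm_num) u).mpr hu
  rw [Zsqrtd.norm_def] at h
  have h1 : u.re ≤ 1 := by nlinarith [mul_self_nonneg u.im]
  have h2 : -1 ≤ u.re := by nlinarith [mul_self_nonneg u.im]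
  have h3 : u.im ≤ 1 := by nlinarith [mul_self_nonneg u.re]
  have h4 : -1 ≤ u.im := by nlinarith [mul_self_nonneg u.re]
  generalize u.re = a at *
  generalize u.im = b at *
  interval_cases a <;> interval_cases b <;> simp_all

lemma SI_eq (x : ℝ) : SI x = (fun p : ℕ × ℕ => Ideal.span {(⟨p.1, p.2⟩ : GaussianInt)}) '' (quad x : Set (ℕ × ℕ)) := by
  ext I
  constructor
  · rintro ⟨h0, hx⟩
    obtain ⟨z, rfl⟩ := (IsPrincipalIdealRing.principal I).principal
    have key : ∃ w : GaussianInt, Associated z w ∧ 1 ≤ w.re ∧ 0 ≤ w.im := by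
      have hz : z ≠ 0 := by rintro rfl; simp at h0
      have hu : IsUnit (⟨0, 1⟩ : GaussianInt) := by
        rw [← Zsqrtd.norm_eq_one_iff' (by norm_num)]; simp [Zsqrtd.norm_def]
      have hz' : z.re ≠ 0 ∨ z.im ≠ 0 := by
        by_contra h; push Not at h; exact hz (Zsqrtd.ext h.1 h.2)
      obtain ⟨v, hv⟩ := hu
      by_cases c1 : 1 ≤ z.re ∧ 0 ≤ z.im
      · exact ⟨z, Associated.refl z, c1⟩
      by_cases c2 : 1 ≤ -z.re ∧ 0 ≤ -z.im
      · exact ⟨-z, ⟨-1, by simp⟩, by simpa using c2⟩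
      by_cases c3 : 1 ≤ -z.im ∧ 0 ≤ z.re
      · exact ⟨z * v, ⟨v, rfl⟩, by simpa [hv] using c3⟩
      · refine ⟨z * (-v : GaussianIntˣ), ⟨-v, rfl⟩, ?_⟩
        simp [hv]
        omega
    obtain ⟨w, hw, h1, h2⟩ := key
    have hs : Ideal.span {z} = Ideal.span {w} := Ideal.span_singleton_eq_span_singleton.mpr hw
    change (normI (Ideal.span {z}) : ℝ) ≤ x at hx
    refine ⟨(w.re.toNat, w.im.toNat), ?_, ?_⟩
    · have hn := normI_span w
      rw [← hs] at hn
      have e1 : ((w.re.toNat : ℕ) : ℤ) = w.re := Int.toNat_of_nonneg (by omega)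
      have e2 : ((w.im.toNat : ℕ) : ℤ) = w.im := Int.toNat_of_nonneg (by omega)
      have : normI (Ideal.span {z}) = w.re.toNat^2 + w.im.toNat^2 := by
        zify; rw [hn, e1, e2]
      rw [this] at hx
      have := nat_le_floor_of_sq hx
      simp only [quad, Finset.coe_filter, Set.mem_ofPred_eq, Finset.mem_product, Finset.mem_Icc]
      refine ⟨⟨⟨by omega, this.1⟩, by omega, this.2⟩, by exact_mod_cast hx⟩
    · change Ideal.span _ = Ideal.span {z}
      rw [hs]
      congr 2
      ext <;> simp <;> omega
  · rintro ⟨⟨a, b⟩, h, rfl⟩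
    simp only [quad, Finset.coe_filter, Set.mem_ofPred_eq, Finset.mem_product, Finset.mem_Icc] at h
    refine ⟨?_, ?_⟩
    · simp only [ne_eq, Ideal.span_singleton_eq_bot]
      intro h'
      have := congrArg Zsqrtd.re h'
      simp at this; omega
    · have hn := normI_span (⟨a, b⟩ : GaussianInt)
      have : normI (Ideal.span {(⟨a, b⟩ : GaussianInt)}) = a^2+b^2 := by zify; rw [hn]
      simp only [this]
      exact_mod_cast h.2

lemma SI_finite (x : ℝ) : (SI x).Finite := by
  rw [SI_eq]; exact (Finset.finite_toSet _).image _

lemma SI_ncard (x : ℝ) : (SI x).ncard = (quad x).card := by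
  rw [SI_eq, Set.ncard_image_of_injOn, Set.ncard_coe_finset]
  rintro ⟨a, b⟩ h ⟨c, d⟩ h' he
  simp only [quad, Finset.coe_filter, Set.mem_ofPred_eq, Finset.mem_product, Finset.mem_Icc] at h h'
  obtain ⟨u, hu⟩ := Ideal.span_singleton_eq_span_singleton.mp he
  have e1 := congrArg Zsqrtd.re hu
  have e2 := congrArg Zsqrtd.im hu
  simp at e1 e2
  rcases unit_cases u.isUnit with ⟨h1, h2⟩ | ⟨h1, h2⟩ | ⟨h1, h2⟩ | ⟨h1, h2⟩ <;>
    simp [h1, h2] at e1 e2 <;> simp only [Prod.mk.injEq] <;> omega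


noncomputable def muI (D : Ideal GaussianInt) : ℝ := (UniqueFactorizationMonoid.moebius D : ℝ)

lemma muI_abs (D : Ideal GaussianInt) : |muI D| ≤ 1 := by
  unfold muI
  by_cases h : Squarefree D
  · rw [h.moebius_eq]; simp [abs_pow]
  · rw [UniqueFactorizationMonoid.moebius_of_not_squarefree h]; simp

lemma muI_prime_mul {p D : Ideal GaussianInt} (hp : Prime p) (h : ¬ p ∣ D) : muI (p * D) = - muI D := by
  unfold muI
  have hr : IsRelPrime p D := (hp.irreducible.isRelPrime_iff_not_dvd).mpr h
  rw [hr.moebius_mul, hp.irreducible.moebius_eq]; simp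

lemma muI_sum {J : Ideal GaussianInt} (hJ : J ≠ ⊥) (S : Finset (Ideal GaussianInt))
    (hS : ∀ D, D ∈ S ↔ D ∣ J) : ∑ D ∈ S, muI D = if J = ⊤ then 1 else 0 := by
  classical
  split_ifs with h
  · subst h
    have : S = {⊤} := by
      ext D; rw [hS, Finset.mem_singleton, ← Ideal.one_eq_top, ← isUnit_iff_dvd_one, Ideal.isUnit_iff]
      rw [Ideal.one_eq_top]
    rw [this, Finset.sum_singleton, ← Ideal.one_eq_top]
    rw [muI, UniqueFactorizationMonoid.moebius_one, Int.cast_one]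
  · obtain ⟨p, hp, hpJ⟩ := WfDvdMonoid.exists_irreducible_factor (a := J) (by rwa [Ideal.isUnit_iff]) hJ
    have hp := hp.prime
    rw [← Finset.sum_filter_add_sum_filter_not S (fun D => p ∣ D)]
    have hinj : Set.InjOn (fun D => p * D) (S.filter (fun D => ¬ p ∣ D) : Finset (Ideal GaussianInt)) :=
      fun a _ b _ hab => mul_left_cancel₀ hp.ne_zero hab
    have e : ∑ D ∈ S.filter (fun D => p ∣ D), muI D
        = ∑ D ∈ (S.filter (fun D => ¬ p ∣ D)).image (fun D => p * D), muI D := by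
      symm
      apply Finset.sum_subset
      · intro D hD
        simp only [Finset.mem_image, Finset.mem_filter, hS] at hD ⊢
        obtain ⟨E, ⟨h1, h2⟩, rfl⟩ := hD
        refine ⟨?_, dvd_mul_right _ _⟩
        obtain ⟨F, rfl⟩ := h1
        obtain ⟨G, rfl⟩ := (hp.dvd_or_dvd hpJ).resolve_left h2
        exact ⟨G, by ring⟩
      · intro D hD hD'
        simp only [Finset.mem_image, Finset.mem_filter, hS, not_exists, not_and] at hD hD'
        obtain ⟨hDJ, E, rfl⟩ := hD
        have hpE : p ∣ E := by
          by_contra hc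
          exact hD' E ⟨(dvd_mul_left _ _).trans hDJ, hc⟩ rfl
        unfold muI
        rw [UniqueFactorizationMonoid.moebius_of_not_squarefree, Int.cast_zero]
        intro hsq
        exact hp.not_isUnit (hsq p (mul_dvd_mul_left p hpE))
    rw [e, Finset.sum_image hinj, ← Finset.sum_add_distrib]
    apply Finset.sum_eq_zero
    intro D hD
    rw [muI_prime_mul hp (Finset.mem_filter.mp hD).2]; ring

lemma normI_le_of_dvd {D J : Ideal GaussianInt} (hJ : J ≠ ⊥) (h : D ∣ J) : D ≠ ⊥ ∧ normI D ≤ normI J := by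
  obtain ⟨E, rfl⟩ := h
  have h1 : D ≠ ⊥ := by rintro rfl; simp at hJ
  have h2 : E ≠ ⊥ := by rintro rfl; simp at hJ
  refine ⟨h1, ?_⟩
  rw [normI_mul]
  exact Nat.le_mul_of_pos_right _ (normI_pos h2)

noncomputable def FI (x : ℝ) : Finset (Ideal GaussianInt) := (SI_finite x).toFinset

lemma mem_FI {x : ℝ} {I : Ideal GaussianInt} : I ∈ FI x ↔ I ≠ ⊥ ∧ (normI I : ℝ) ≤ x := by
  simp [FI, SI]

noncomputable def NI (x : ℝ) : ℝ := (FI x).card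

lemma NI_eq (x : ℝ) : NI x = (quad x).card := by
  rw [NI, ← SI_ncard, FI, Set.ncard_eq_toFinset_card _ (SI_finite x)]

lemma P_eq (x : ℝ) : P x = ((FI x ×ˢ FI x : Finset _) : Set (Ideal GaussianInt × Ideal GaussianInt)) := by
  ext ⟨I, J⟩
  simp [P, mem_FI]; tauto

lemma P_card (x : ℝ) : ((P x).ncard : ℝ) = NI x ^ 2 := by
  rw [P_eq, Set.ncard_coe_finset, Finset.card_product, NI]; push_cast; ring

open Classical in
lemma card_mult {x : ℝ} {D : Ideal GaussianInt} (hD : D ≠ ⊥) :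
    (((FI x).filter (fun I => D ∣ I)).card : ℝ) = NI (x / normI D) := by
  have hpos : (0:ℝ) < normI D := by exact_mod_cast normI_pos hD
  rw [NI, ← Finset.card_image_of_injective (FI (x / normI D)) (f := fun I => D * I)
    (fun a b hab => mul_left_cancel₀ hD hab)]
  congr 2
  ext I
  simp only [Finset.mem_filter, Finset.mem_image, mem_FI]
  constructor
  · rintro ⟨⟨h1, h2⟩, E, rfl⟩
    refine ⟨E, ⟨?_, ?_⟩, rfl⟩
    · rintro rfl; simp at h1
    · rw [le_div_iff₀ hpos]; rw [normI_mul] at h2; push_cast at h2; linarith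
  · rintro ⟨E, ⟨h1, h2⟩, rfl⟩
    refine ⟨⟨mul_ne_zero hD h1, ?_⟩, dvd_mul_right _ _⟩
    rw [le_div_iff₀ hpos] at h2; rw [normI_mul]; push_cast; linarith

lemma A_eq (x : ℝ) : ({p ∈ P x | p.1 ⊔ p.2 = ⊤}.ncard : ℝ) =
    ∑ D ∈ FI x, muI D * NI (x / normI D) ^ 2 := by
  classical
  have e1 : {p ∈ P x | p.1 ⊔ p.2 = ⊤} = (((FI x ×ˢ FI x).filter (fun p => p.1 ⊔ p.2 = ⊤) : Finset _) : Set (Ideal GaussianInt × Ideal GaussianInt)) := by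
    rw [P_eq]; ext p; simp
  rw [e1, Set.ncard_coe_finset, Finset.card_filter]
  push_cast
  have e2 : ∀ p ∈ FI x ×ˢ FI x, (if p.1 ⊔ p.2 = ⊤ then (1:ℝ) else 0)
      = ∑ D ∈ FI x, if D ∣ p.1 ∧ D ∣ p.2 then muI D else 0 := by
    intro p hp
    simp only [Finset.mem_product, mem_FI] at hp
    rw [← Finset.sum_filter]
    symm
    apply muI_sum
    · intro h; exact hp.1.1 (by rw [eq_bot_iff, ← h]; exact le_sup_left)
    · intro D
      simp only [Finset.mem_filter, mem_FI, Ideal.dvd_iff_le, sup_le_iff]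
      constructor
      · tauto
      · intro h
        refine ⟨?_, h⟩
        have := normI_le_of_dvd hp.1.1 (Ideal.dvd_iff_le.mpr h.1)
        refine ⟨this.1, le_trans ?_ hp.1.2⟩
        exact_mod_cast this.2
  rw [Finset.sum_congr rfl e2, Finset.sum_comm]
  apply Finset.sum_congr rfl
  intro D hD
  rw [← Finset.sum_filter, Finset.sum_const, Finset.filter_product, Finset.card_product, nsmul_eq_mul]
  push_cast
  rw [card_mult (mem_FI.mp hD).1]
  ring


abbrev BI := {I : Ideal GaussianInt // I ≠ ⊥}

lemma BI_pos (D : BI) : (1:ℝ) ≤ normI D.1 := by exact_mod_cast normI_pos D.2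

lemma gen_exists (D : BI) : ∃ p : ℕ × ℕ, D.1 = Ideal.span {(⟨p.1, p.2⟩ : GaussianInt)} ∧ 1 ≤ p.1 ∧
    (normI D.1 : ℝ) = p.1^2 + p.2^2 := by
  have h : D.1 ∈ SI (normI D.1) := ⟨D.2, le_refl _⟩
  rw [SI_eq] at h
  obtain ⟨p, hp, he⟩ := h
  simp only [quad, Finset.coe_filter, Set.mem_ofPred_eq, Finset.mem_product, Finset.mem_Icc] at hp
  refine ⟨p, he.symm, hp.1.1.1, ?_⟩
  rw [← he]
  have := normI_span (⟨p.1, p.2⟩ : GaussianInt)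
  simp only at this
  exact_mod_cast this

lemma summable_43 : Summable (fun D : BI => (normI D.1 : ℝ) ^ (-(4:ℝ)/3)) := by
  choose g h1 h2 h3 using gen_exists
  have hg : Function.Injective g := by
    intro a b hab
    apply Subtype.ext
    rw [h1 a, h1 b, hab]
  have s1 : Summable (fun a : ℕ => (a:ℝ) ^ (-(4:ℝ)/3)) := by
    rw [Real.summable_nat_rpow]; norm_num
  have s2 : Summable (fun b : ℕ => ((b+1:ℕ):ℝ) ^ (-(4:ℝ)/3)) :=
    (summable_nat_add_iff 1).mpr s1
  have s3 := (s1.mul_of_nonneg s2 (fun a => by positivity) (fun b => by positivity))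
  have s4 := ((s3.mul_left ((2:ℝ)^((4:ℝ)/3))).comp_injective hg)
  refine Summable.of_nonneg_of_le (fun D => by positivity) (fun D => ?_) s4
  simp only [Function.comp]
  have ha : (1:ℝ) ≤ (g D).1 := by exact_mod_cast h2 D
  have hb : (0:ℝ) ≤ (g D).2 := by positivity
  rw [h3 D]
  push_cast
  generalize ((g D).1 : ℝ) = a at *
  generalize ((g D).2 : ℝ) = b at *
  have e : (2:ℝ)^((4:ℝ)/3) = (1/2:ℝ)^(-(4:ℝ)/3) := by
    rw [one_div, Real.inv_rpow (by norm_num), ← Real.rpow_neg (by norm_num)]; norm_num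
  rw [e, ← Real.mul_rpow (by positivity) (by positivity), ← Real.mul_rpow (by positivity) (by positivity)]
  apply Real.rpow_le_rpow_of_nonpos (by positivity) _ (by norm_num)
  nlinarith [sq_nonneg (a-b), sq_nonneg b]

lemma summable_2 : Summable (fun D : BI => 1 / (normI D.1 : ℝ) ^ 2) := by
  refine Summable.of_nonneg_of_le (fun D => by positivity) (fun D => ?_) summable_43
  have h := BI_pos D
  rw [one_div, ← Real.rpow_natCast, ← Real.rpow_neg (by linarith)]
  apply Real.rpow_le_rpow_of_exponent_le h
  norm_num

lemma summable_mu : Summable (fun D : BI => muI D.1 / (normI D.1 : ℝ) ^ 2) := by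
  apply Summable.of_norm_bounded summable_2
  intro D
  rw [Real.norm_eq_abs, abs_div, abs_of_nonneg (by positivity : (0:ℝ) ≤ (normI D.1 : ℝ)^2)]
  gcongr
  exact muI_abs _

noncomputable def mInv : ℝ := ∑' D : BI, muI D.1 / (normI D.1 : ℝ) ^ 2

lemma prod_aux {ι : Type*} (f g : ι → ℝ) (hf : Summable f) (hg : Summable g) :
    Summable (fun q : ι × ι => f q.1 * g q.2) ∧ ∑' q : ι × ι, f q.1 * g q.2 = (∑' i, f i) * ∑' i, g i :=
  ⟨summable_mul_of_summable_norm hf.norm hg.norm, (tsum_mul_tsum_of_summable_norm hf.norm hg.norm).symm⟩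

open Classical in
lemma m_zeta : mInv * zetaQi2 = 1 := by
  let e : BI × BI → BI × BI := fun q => (q.1, ⟨q.1.1 * q.2.1, mul_ne_zero q.1.2 q.2.2⟩)
  have he : Function.Injective e := by
    rintro ⟨a, b⟩ ⟨c, d⟩ h
    simp only [e, Prod.mk.injEq, Subtype.mk.injEq] at h
    obtain ⟨rfl, h⟩ := h
    have := mul_left_cancel₀ a.2 h
    rw [Subtype.ext this]
  let F : BI × BI → ℝ := fun q => if q.1.1 ∣ q.2.1 then muI q.1.1 / (normI q.2.1 : ℝ)^2 else 0
  have hF0 : ∀ q, q ∉ Set.range e → F q = 0 := by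
    rintro ⟨D, J⟩ h
    simp only [F]
    rw [if_neg]
    rintro ⟨E, hE⟩
    apply h
    refine ⟨(D, ⟨E, ?_⟩), ?_⟩
    · rintro rfl; apply J.2; rw [hE]; simp
    · simp only [e]; congr 1; exact Subtype.ext hE.symm
  have hFe : F ∘ e = fun q : BI × BI => (muI q.1.1 / (normI q.1.1 : ℝ)^2) * (1 / (normI q.2.1 : ℝ)^2) := by
    funext q
    simp only [F, e, Function.comp]
    rw [if_pos (dvd_mul_right _ _), normI_mul]
    push_cast
    rw [div_mul_div_comm, mul_one, mul_pow]
  have haux := prod_aux (fun D : BI => muI D.1 / (normI D.1 : ℝ) ^ 2) (fun D : BI => 1 / (normI D.1 : ℝ) ^ 2) summable_mu summable_2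
  rw [← hFe] at haux
  have hs : Summable (F ∘ e) := haux.1
  have hsF : Summable F := (he.summable_iff hF0).mp hs
  have t1 : ∑' q, F q = mInv * zetaQi2 := by
    rw [← he.tsum_eq (f := F) (fun q hq => by by_contra h; exact hq (hF0 q h))]
    rw [mInv, zetaQi2, ← haux.2]
    rfl
  have t2 : ∑' q, F q = ∑' J : BI, ∑' D : BI, F (D, J) := by
    rw [← (Equiv.prodComm BI BI).tsum_eq F]
    exact (hsF.comp_injective (Equiv.prodComm BI BI).injective).tsum_prod
  have t3 : ∀ J : BI, ∑' D : BI, F (D, J) = if J.1 = ⊤ then 1 else 0 := by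
    intro J
    let S := (FI (normI J.1)).filter (fun D => D ∣ J.1)
    have hS : ∀ D, D ∈ S ↔ D ∣ J.1 := by
      intro D
      simp only [S, Finset.mem_filter, mem_FI]
      refine ⟨fun h => h.2, fun h => ⟨?_, h⟩⟩
      have := normI_le_of_dvd J.2 h
      exact ⟨this.1, by exact_mod_cast this.2⟩
    have hsum := muI_sum J.2 S hS
    let G : Ideal GaussianInt → ℝ := fun D => if D ∣ J.1 then muI D / (normI J.1 : ℝ)^2 else 0
    have a1 : ∑' D : BI, F (D, J) = ∑' D, G D := by
      change ∑' D : BI, G D = _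
      apply tsum_subtype_eq_of_support_subset (f := G) (s := {I | I ≠ ⊥})
      intro D hD
      rw [Function.mem_support] at hD
      simp only [G] at hD
      split_ifs at hD with h
      · exact (normI_le_of_dvd J.2 h).1
      · exact absurd rfl hD
    rw [a1, tsum_eq_sum (s := S)]
    · have : ∀ D ∈ S, G D = muI D / (normI J.1 : ℝ)^2 := fun D hD => if_pos ((hS D).mp hD)
      rw [Finset.sum_congr rfl this, ← Finset.sum_div, hsum]
      split_ifs with h
      · rw [h, normI_eq, Ideal.absNorm_top]; norm_num
      · simp
    · intro D hD
      exact if_neg (fun h => hD ((hS D).mpr h))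
  rw [← t1, t2]
  simp only [t3]
  rw [tsum_eq_single (⟨⊤, top_ne_bot⟩ : BI)]
  · simp
  · intro J hJ
    exact if_neg (fun h => hJ (Subtype.ext h))

noncomputable def cc : ℝ := 2 * kap - 1/2

lemma cc_ge : 1/2 ≤ cc := by unfold cc; linarith [kap_ge]

lemma NI_zero {y : ℝ} (hy : y < 1) : NI y = 0 := by
  have : FI y = ∅ := by
    rw [Finset.eq_empty_iff_forall_notMem]
    intro I hI
    rw [mem_FI] at hI
    have := BI_pos ⟨I, hI.1⟩
    simp only at this
    linarith
  rw [NI, this]; simp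

lemma NI_bound {x : ℝ} (hx : 1 ≤ x) : |NI x - cc * x| ≤ 620 * x^((1:ℝ)/3) := by
  rw [NI_eq]; exact gauss_circle x hx

lemma NI_sq : ∃ K : ℝ, 0 ≤ K ∧ ∀ y : ℝ, 0 < y → |NI y ^ 2 - cc^2 * y^2| ≤ K * y^((4:ℝ)/3) := by
  have hc := cc_ge
  refine ⟨620 * (2 * cc + 620) + cc^2, by positivity, ?_⟩
  intro y hy
  by_cases h1 : 1 ≤ y
  · have hb := NI_bound h1
    set t := y^((1:ℝ)/3) with ht
    have ht1 : 1 ≤ t := Real.one_le_rpow h1 (by norm_num)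
    have hy3 : y = t^3 := by
      rw [ht, ← Real.rpow_natCast, ← Real.rpow_mul hy.le]; norm_num
    have hy4 : y^((4:ℝ)/3) = t^4 := by
      rw [ht, ← Real.rpow_natCast, ← Real.rpow_mul hy.le]; norm_num
    rw [hy4]
    have e : NI y ^ 2 - cc^2 * y^2 = (NI y - cc * y) * ((NI y - cc * y) + 2 * cc * y) := by ring
    rw [e, abs_mul]
    have e2 : |(NI y - cc * y) + 2 * cc * y| ≤ 620 * t + 2 * cc * y := by
      refine (abs_add_le _ _).trans ?_
      rw [abs_of_nonneg (by positivity : 0 ≤ 2 * cc * y)]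
      linarith
    have e3 : 620 * t + 2 * cc * y ≤ (2 * cc + 620) * t^3 := by
      rw [hy3]
      nlinarith [le_self_pow₀ ht1 (by norm_num : 3 ≠ 0)]
    calc |NI y - cc * y| * |(NI y - cc * y) + 2 * cc * y| ≤ (620 * t) * ((2 * cc + 620) * t^3) := by
          gcongr; exact e2.trans e3
      _ = 620 * (2 * cc + 620) * t^4 := by ring
      _ ≤ _ := by gcongr; linarith [sq_nonneg cc]
  · push Not at h1
    rw [NI_zero h1]
    have : y^2 ≤ y^((4:ℝ)/3) := by
      rw [← Real.rpow_natCast]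
      exact Real.rpow_le_rpow_of_exponent_ge hy h1.le (by norm_num)
    have h0 : 0 ≤ y^((4:ℝ)/3) := by positivity
    rw [abs_le]
    have hcc : 0 ≤ cc^2 := sq_nonneg _
    constructor
    · nlinarith [mul_le_mul_of_nonneg_left this hcc]
    · nlinarith [mul_nonneg hcc (sq_nonneg y)]

lemma NI_lower {x : ℝ} (hx : 1 ≤ x) : x / 10^6 ≤ NI x := by
  have hb := (abs_le.mp (NI_bound hx)).1
  have hc := cc_ge
  have h1 : 1 ≤ NI x := by
    have : (⊤ : Ideal GaussianInt) ∈ FI x := by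
      rw [mem_FI]
      refine ⟨top_ne_bot, ?_⟩
      rw [normI_eq, Ideal.absNorm_top]; simpa using hx
    rw [NI]
    exact_mod_cast Finset.card_pos.mpr ⟨_, this⟩
  set t := x^((1:ℝ)/3) with ht
  have ht1 : 1 ≤ t := Real.one_le_rpow hx (by norm_num)
  have hy3 : x = t^3 := by
    rw [ht, ← Real.rpow_natCast, ← Real.rpow_mul (by linarith)]; norm_num
  by_cases h : t ≤ 100
  · have : t^3 ≤ 100^3 := by gcongr
    rw [hy3]; rw [hy3] at h1; linarith
  · push Not at h
    have h2 : 0 ≤ t * (t^2 - 10000) := by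
      apply mul_nonneg (by linarith); nlinarith
    have h3 : 1/2 * x ≤ cc * x := by gcongr
    have h4 : x / 10^6 = t^3/10^6 := by rw [← hy3]
    have h5 : 1/2 * x = t^3/2 := by rw [← hy3]; ring
    rw [h4]
    nlinarith

lemma A_bound : ∃ K : ℝ, 0 ≤ K ∧ ∀ x : ℝ, 1 ≤ x →
    |(∑ D ∈ FI x, muI D * NI (x / normI D) ^ 2) - mInv * (cc^2 * x^2)| ≤ K * x^((4:ℝ)/3) := by
  classical
  obtain ⟨K, hK, hb⟩ := NI_sq
  refine ⟨K * ∑' D : BI, (normI D.1 : ℝ) ^ (-(4:ℝ)/3), mul_nonneg hK (tsum_nonneg fun D => by positivity), ?_⟩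
  intro x hx
  have hx0 : 0 < x := by linarith
  let G : Ideal GaussianInt → ℝ := fun D => if D = ⊥ then 0 else muI D * NI (x / normI D) ^ 2
  have hG0 : ∀ D, D ∉ FI x → G D = 0 := by
    intro D hD
    simp only [G]
    split_ifs with h
    · rfl
    · rw [NI_zero]; · simp
      have hp := BI_pos ⟨D, h⟩
      simp only at hp
      rw [div_lt_one (by linarith)]
      by_contra hc
      push Not at hc
      exact hD (mem_FI.mpr ⟨h, hc⟩)
  have hsG : Summable (fun D : BI => G D.1) :=
    (summable_of_ne_finset_zero (s := FI x) hG0).comp_injective Subtype.val_injective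
  have e1 : (∑ D ∈ FI x, muI D * NI (x / normI D) ^ 2) = ∑' D : BI, G D.1 := by
    have : ∑' D : BI, G D.1 = ∑' D, G D := by
      apply tsum_subtype_eq_of_support_subset (f := G) (s := {I | I ≠ ⊥})
      intro D hD
      rw [Function.mem_support] at hD
      rintro rfl
      exact hD (if_pos rfl)
    rw [this, tsum_eq_sum (s := FI x) hG0]
    apply Finset.sum_congr rfl
    intro D hD
    exact (if_neg (mem_FI.mp hD).1).symm
  rw [e1, mInv, ← tsum_mul_right, ← hsG.tsum_sub (summable_mu.mul_right _), mul_right_comm, ← tsum_mul_left]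
  rw [← Real.norm_eq_abs]
  apply tsum_of_norm_bounded (summable_43.mul_left _).hasSum
  intro D
  have hp := BI_pos D
  have hG : G D.1 = muI D.1 * NI (x / normI D.1) ^ 2 := if_neg D.2
  have hq := hb (x / normI D.1) (by positivity)
  have e2 : G D.1 - muI D.1 / (normI D.1 : ℝ)^2 * (cc^2 * x^2)
      = muI D.1 * (NI (x / normI D.1) ^ 2 - cc^2 * (x / normI D.1)^2) := by
    rw [hG]; field_simp
  rw [e2, Real.norm_eq_abs, abs_mul]
  calc |muI D.1| * |NI (x / normI D.1) ^ 2 - cc^2 * (x / normI D.1)^2|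
      ≤ 1 * (K * (x / normI D.1)^((4:ℝ)/3)) := by
        gcongr; exact muI_abs _
    _ = K * x^((4:ℝ)/3) * (normI D.1 : ℝ) ^ (-(4:ℝ)/3) := by
        rw [Real.div_rpow hx0.le (by linarith), neg_div, Real.rpow_neg (by linarith)]
        ring

theorem coprimeProbability_asymptotic :
    ∃ C : ℝ, 0 < C ∧ ∀ x : ℝ, 1 ≤ x →
      |({p ∈ P x | p.1 ⊔ p.2 = ⊤}.ncard : ℝ) / ((P x).ncard : ℝ) - 1 / zetaQi2|
        ≤ C * x ^ (-(2 : ℝ) / 3) := by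
  obtain ⟨K1, hK1, h1⟩ := A_bound
  obtain ⟨K2, hK2, h2⟩ := NI_sq
  have hm : 1 / zetaQi2 = mInv := by
    have h := m_zeta
    have hz : zetaQi2 ≠ 0 := by intro h0; rw [h0] at h; simp at h
    field_simp; linarith
  refine ⟨(K1 + |mInv| * K2) * 10^12 + 1, by positivity, ?_⟩
  intro x hx
  have hx0 : 0 < x := by linarith
  rw [hm, A_eq, P_card]
  have b1 := h1 x hx
  have b2 := h2 x hx0
  have b3 := NI_lower hx
  generalize (∑ D ∈ FI x, muI D * NI (x / normI D) ^ 2) = A at *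
  have hN : 0 < NI x := lt_of_lt_of_le (by positivity) b3
  have hT : x^2 / 10^12 ≤ NI x ^ 2 := by
    have : (x / 10^6)^2 ≤ NI x ^2 := by gcongr
    calc x^2/10^12 = (x / 10^6)^2 := by ring
      _ ≤ _ := this
  have hT0 : 0 < NI x ^ 2 := by positivity
  have e : A / NI x ^ 2 - mInv = (A - mInv * NI x ^ 2) / NI x ^ 2 := by field_simp
  have hnum : |A - mInv * NI x ^ 2| ≤ (K1 + |mInv| * K2) * x^((4:ℝ)/3) := by
    have : A - mInv * NI x ^ 2 = (A - mInv * (cc^2 * x^2)) - mInv * (NI x ^ 2 - cc^2 * x^2) := by ring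
    rw [this]
    refine (abs_sub _ _).trans ?_
    rw [abs_mul]
    have := mul_le_mul_of_nonneg_left b2 (abs_nonneg mInv)
    nlinarith
  have hpow : x^((4:ℝ)/3) = x^(-(2:ℝ)/3) * x^2 := by
    rw [← Real.rpow_natCast, ← Real.rpow_add hx0]; norm_num
  rw [e, abs_div, abs_of_pos hT0, div_le_iff₀ hT0]
  refine hnum.trans ?_
  rw [hpow]
  have hp : 0 < x^(-(2:ℝ)/3) := by positivity
  have hK : 0 ≤ K1 + |mInv| * K2 := by positivity
  generalize x^(-(2:ℝ)/3) = w at *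
  calc (K1 + |mInv| * K2) * (w * x^2) = ((K1 + |mInv| * K2) * 10^12 * w) * (x^2/10^12) := by ring
    _ ≤ ((K1 + |mInv| * K2) * 10^12 * w) * NI x ^ 2 := by gcongr
    _ ≤ _ := by gcongr; linarith
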